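/- Let γ ∈ ℝ, let q ≥ 3 be fixed, and let K be a location-scale invariant kernel, not everywhere constant, such that E[|K((Z_{q−j:q−1})_{j=1}^{q})|^p] < ∞ for all p > 0, where Z_1,…,Z_{q−1} are iid standard GP(γ) and Z_{0:q−1} := 0. With ζ_{m,1} = cov(K_m(Z_S), K_m(Z_{S'})) for iid GP(γ) random variables indexed by sets S, S' with |S| = |S'| = m and |S ∩ S'| = 1, one has lim_{m→∞} m ζ_{m,1} = ∫_0^∞ (E[ K̄_{q+1}((Z_{q−j:q−1})_{j=1}^{q}, h_γ(S_q/x)) ])² dx =: σ²_K(γ), where K̄_{q+1} = K_{q+1} − θ with θ = E[K((Z_{q−j:q−1})_{j=1}^{q})], h_γ(y) = (y^γ − 1)/γ (= ln y if γ = 0), and S_q is an Erlang(q) random variable independent of Z_1,…,Z_{q−1}. -/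

import Mathlib

open MeasureTheory ProbabilityTheory Filter Real Set Topology
open scoped ENNReal NNReal Classical

noncomputable section

/-- The `j`-th largest entry of the tuple `x` (`j = 0` gives the maximum, `j = 1` the
second largest, ...); `0` when `j` is out of range. -/
def descStat {m : ℕ} (x : Fin m → ℝ) (j : ℕ) : ℝ :=
  if h : j < m then (x ∘ Tuple.sort x) ⟨m - 1 - j, by omega⟩ else 0

/-- The kernel of degree `m` obtained from `K` by applying it to the top-`q`
(descending) order statistics: `K_m(x_1,…,x_m) = K(x_{m:m},…,x_{m−q+1:m})`. -/
def Km {q : ℕ} (K : (Fin q → ℝ) → ℝ) (m : ℕ) (x : Fin m → ℝ) : ℝ :=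
  K fun j => descStat x (j : ℕ)

/-- `K(a x_1 + b, …, a x_q + b) = K(x_1, …, x_q)` for all `a > 0`, `b ∈ ℝ`. -/
def LocScaleInvariant {q : ℕ} (K : (Fin q → ℝ) → ℝ) : Prop :=
  ∀ a b : ℝ, 0 < a → ∀ x : Fin q → ℝ, K (fun j => a * x j + b) = K x

/-- `h_γ(y) = (y^γ - 1)/γ`, interpreted as `log y` when `γ = 0`. -/
def hGamma (γ : ℝ) (y : ℝ) : ℝ := if γ = 0 then Real.log y else (y ^ γ - 1) / γ

lemma measurable_hGamma (γ : ℝ) : Measurable (hGamma γ) := by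
  unfold hGamma
  split_ifs
  · exact Real.measurable_log
  · fun_prop

/-- The uniform distribution on `(0,1)`. -/
def unif01 : Measure ℝ := volume.restrict (Set.Ioo (0:ℝ) 1)

instance : IsProbabilityMeasure unif01 := ⟨by simp [unif01]⟩

/-- The standard Pareto(1) distribution, with cdf `1 - 1/y` for `y ≥ 1`. -/
def pareto1 : Measure ℝ := ProbabilityTheory.paretoMeasure 1 1

instance : IsProbabilityMeasure pareto1 :=
  ProbabilityTheory.isProbabilityMeasure_paretoMeasure one_pos one_pos

/-- The standard generalized Pareto distribution `GP(γ)`: the law of `h_γ(Y)` for `Y`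
standard Pareto(1). -/
def gpMeasure (γ : ℝ) : Measure ℝ := pareto1.map (hGamma γ)

instance (γ : ℝ) : IsProbabilityMeasure (gpMeasure γ) :=
  Measure.isProbabilityMeasure_map (measurable_hGamma γ).aemeasurable

/-- The unit exponential distribution: the law of `-log U` for `U` uniform on `(0,1)`. -/
def expMeasure1 : Measure ℝ := unif01.map fun u => -Real.log u

instance : IsProbabilityMeasure expMeasure1 :=
  Measure.isProbabilityMeasure_map Real.measurable_log.neg.aemeasurable

/-- The Erlang(q) distribution: the law of the sum of `q` independent unit exponentials. -/
def erlangMeasure (q : ℕ) : Measure ℝ :=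
  (Measure.pi fun _ : Fin q => expMeasure1).map fun e => ∑ i, e i

instance (q : ℕ) : IsProbabilityMeasure (erlangMeasure q) :=
  Measure.isProbabilityMeasure_map
    (Finset.measurable_sum _ fun i _ => measurable_pi_apply i).aemeasurable

/-- The joint law of `r` iid `GP(γ)` random variables. -/
def gpPi (γ : ℝ) (r : ℕ) : Measure (Fin r → ℝ) := Measure.pi fun _ => gpMeasure γ

instance (γ : ℝ) (r : ℕ) : IsProbabilityMeasure (gpPi γ r) := by
  unfold gpPi; infer_instance

/-- The vector `(Z_{q-j:q-1})_{j=1}^{q}`: the descending order statistics of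
`z_1,…,z_{q-1}` with an extra last entry `Z_{0:q-1} := 0`. -/
def refVec {q : ℕ} (z : Fin (q-1) → ℝ) : Fin q → ℝ := fun j => descStat z (j : ℕ)

/-- `θ = E[K((Z_{q-j:q-1})_{j=1}^{q})]` for iid `GP(γ)` variables `Z_1,…,Z_{q-1}`. -/
def thetaK (γ : ℝ) {q : ℕ} (K : (Fin q → ℝ) → ℝ) : ℝ :=
  ∫ z, K (refVec z) ∂(gpPi γ (q-1))

/-- all moments of `K((Z_{q-j:q-1})_{j=1}^{q})` are finite. -/
def MomentCond (γ : ℝ) {q : ℕ} (K : (Fin q → ℝ) → ℝ) : Prop :=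
  ∀ p : ℝ, 0 < p →
    ∫⁻ z, ENNReal.ofReal (|K (refVec z)| ^ p) ∂(gpPi γ (q-1)) < ⊤

/-- The asymptotic variance
`σ²_K(γ) = ∫_0^∞ (E[K̄_{q+1}((Z_{q-j:q-1})_{j=1}^q, h_γ(S_q/x))])² dx`. -/
def sigmaSqK (γ : ℝ) {q : ℕ} (K : (Fin q → ℝ) → ℝ) : ℝ :=
  ∫ x in Set.Ioi (0:ℝ),
    (∫ zs : (Fin (q-1) → ℝ) × ℝ,
        (Km K (q+1) (Fin.snoc (refVec zs.1) (hGamma γ (zs.2 / x))) - thetaK γ K)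
      ∂((gpPi γ (q-1)).prod (erlangMeasure q))) ^ 2

/-- The U-statistic with kernel `K_m` evaluated on the sample `z`. -/
def UStat {q : ℕ} (K : (Fin q → ℝ) → ℝ) (m n : ℕ) (z : Fin n → ℝ) : ℝ :=
  ((n.choose m : ℝ))⁻¹ *
    ∑ I ∈ Finset.powersetCard m (Finset.univ : Finset (Fin n)),
      Km K I.card fun j => z (I.orderIsoOfFin rfl j).1

/-- Condition on the degree sequence: `m = o(n^{1-ε})` and `log n = o(m^{1-δ})`. -/
def DegreeCond (m : ℕ → ℕ) : Prop :=
  ∃ ε > (0:ℝ), ∃ δ > (0:ℝ),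
    Tendsto (fun n => (m n : ℝ) / (n : ℝ) ^ (1 - ε)) atTop (𝓝 0) ∧
    Tendsto (fun n : ℕ => Real.log n / (m n : ℝ) ^ (1 - δ)) atTop (𝓝 0)

/-- `ζ_{m,ℓ} = cov(K_m(Z_S), K_m(Z_{S'}))` for the blocks `S = [1:m]`,
`S' = [(m-ℓ+1):(2m-ℓ)]` (zero-indexed here), which overlap in `ℓ` indices. -/
def zetaCov {Ω : Type*} [MeasurableSpace Ω] (P : Measure Ω) {q : ℕ}
    (K : (Fin q → ℝ) → ℝ) (Z : ℕ → Ω → ℝ) (m ℓ : ℕ) : ℝ :=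
  (∫ ω, Km K m (fun i : Fin m => Z i ω) * Km K m (fun i : Fin m => Z (m - ℓ + i) ω) ∂P)
    - (∫ ω, Km K m (fun i : Fin m => Z i ω) ∂P)
      * (∫ ω, Km K m (fun i : Fin m => Z (m - ℓ + i) ω) ∂P)

/-- Convergence in distribution to a Gaussian, expressed via pointwise convergence of
the cumulative distribution functions (the Gaussian cdf being continuous). -/
def TendstoGaussian {Ω : Type*} [MeasurableSpace Ω] (P : Measure Ω)
    (T : ℕ → Ω → ℝ) (μ : ℝ) (v : ℝ≥0) : Prop :=
  ∀ x : ℝ, Tendsto (fun n => (P {ω | T n ω ≤ x}).toReal) atTop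
    (𝓝 ((gaussianReal μ v (Set.Iic x)).toReal))

/-- Convergence in probability to the constant `c`. -/
def TendstoInProb {Ω : Type*} [MeasurableSpace Ω] (P : Measure Ω)
    (T : ℕ → Ω → ℝ) (c : ℝ) : Prop :=
  ∀ ε : ℝ, 0 < ε → Tendsto (fun n => (P {ω | ε ≤ |T n ω - c|}).toReal) atTop (𝓝 0)

/-!
Represent `GP(γ)` variables as `h_γ(1/U)` with `U` uniform on `(0,1)`, so that `K_m` depends on the
`q` smallest of `m` uniforms and location-scale invariance of `K` becomes invariance under rescaling
them. The covariance of two blocks sharing one variable is the variance of the conditional mean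
`ψ(U)` of `K_m` given that variable, and substituting `u = x/m` turns `m ζ_{m,1}` into
`∫₀^m (ψ(x/m) - θ)² dx`.

Conditionally on the `q`-th smallest of the other `m - 1` uniforms, the `q - 1` smaller ones are iid
uniform below it. Rescaling by it shows that `ψ(x/m) - θ = E[g(x/T_m)]`, where `T_m` is `m` times
this order statistic and `g` does not depend on `m`: `g(y)` is the mean effect on the kernel of
inserting a point with coordinate `y`, relative to the `q`-th smallest. As `m → ∞`, the densities of
`T_m` converge to the Erlang(q) density and are dominated by an integrable `b` with `∫ t b(t) dt`
finite. For such a weight, Cauchy–Schwarz in the form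
`(∫ b(t) g(x/t) dt)² ≤ ∫ b · ∫ b(t) g(x/t)² dt` and the substitution `x = t y` give an `L²`
envelope, so the integrals of squares converge by dominated convergence as soon as `g ∈ L²`.
-/

section OrderStatistics

/-- The number of entries of `x` that are at least `t`. The order statistics enter the proofs only
through these counts, see `le_descStat_iff`. -/
def countGE {m : ℕ} (x : Fin m → ℝ) (t : ℝ) : ℕ := ({i | t ≤ x i} : Finset (Fin m)).card

lemma countGE_eq_sum {m : ℕ} (x : Fin m → ℝ) (t : ℝ) :
    countGE x t = ∑ i, if t ≤ x i then 1 else 0 :=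
  Finset.card_filter _ _

lemma countGE_comp_perm {m : ℕ} (x : Fin m → ℝ) (σ : Equiv.Perm (Fin m)) :
    countGE (x ∘ σ) = countGE x := by
  funext t
  simp only [countGE_eq_sum]
  exact Equiv.sum_comp σ fun i => if t ≤ x i then 1 else 0

lemma countGE_cons {m : ℕ} (a : ℝ) (x : Fin m → ℝ) (t : ℝ) :
    countGE (Fin.cons a x : Fin (m + 1) → ℝ) t = countGE x t + if t ≤ a then 1 else 0 := by
  simp only [countGE_eq_sum, Fin.sum_univ_succ, Fin.cons_zero, Fin.cons_succ, add_comm]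

lemma countGE_snoc {m : ℕ} (x : Fin m → ℝ) (a t : ℝ) :
    countGE (Fin.snoc x a : Fin (m + 1) → ℝ) t = countGE x t + if t ≤ a then 1 else 0 := by
  simp only [countGE_eq_sum, Fin.sum_univ_castSucc, Fin.snoc_castSucc, Fin.snoc_last]

lemma countGE_le {m : ℕ} (x : Fin m → ℝ) (t : ℝ) : countGE x t ≤ m :=
  (Finset.card_le_univ _).trans_eq (Fintype.card_fin m)

lemma countGE_eq_of_forall_le {m : ℕ} {x : Fin m → ℝ} {t : ℝ} (h : ∀ i, t ≤ x i) :
    countGE x t = m := by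
  simp [countGE, h]

lemma countGE_antitone {m : ℕ} (x : Fin m → ℝ) : Antitone (countGE x) := fun _ _ hst =>
  Finset.card_le_card fun i hi => by
    simp only [Finset.mem_filter, Finset.mem_univ, true_and] at hi ⊢
    exact hst.trans hi

lemma measurable_countGE {m : ℕ} (t : ℝ) : Measurable fun x : Fin m → ℝ => countGE x t := by
  simp only [countGE_eq_sum]
  exact Finset.measurable_fun_sum _ fun i _ =>
    Measurable.ite (measurableSet_le measurable_const (measurable_pi_apply i))
      measurable_const measurable_const

lemma le_apply_iff_le_countGE {m : ℕ} {s : Fin m → ℝ} (hs : Monotone s) (k : Fin m) (t : ℝ) :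
    t ≤ s k ↔ m - k ≤ countGE s t := by
  constructor
  · intro h
    rw [← Fin.card_Ici k]
    refine Finset.card_le_card fun i hi => ?_
    simpa using h.trans (hs (Finset.mem_Ici.1 hi))
  · contrapose!
    intro h
    have hsub : ({i | t ≤ s i} : Finset (Fin m)) ⊆ Finset.Ioi k := fun i hi => by
      simp only [Finset.mem_filter, Finset.mem_univ, true_and] at hi
      exact Finset.mem_Ioi.2 (hs.reflect_lt (h.trans_le hi))
    have hcard := Finset.card_le_card hsub
    rw [Fin.card_Ioi] at hcard
    rw [countGE]
    omega

lemma le_descStat_iff {m : ℕ} (x : Fin m → ℝ) {j : ℕ} (hj : j < m) (t : ℝ) :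
    t ≤ descStat x j ↔ j < countGE x t := by
  rw [descStat, dif_pos hj, le_apply_iff_le_countGE (Tuple.monotone_sort x), countGE_comp_perm]
  simp only
  omega

lemma descStat_eq_zero {m : ℕ} (x : Fin m → ℝ) {j : ℕ} (hj : m ≤ j) : descStat x j = 0 :=
  dif_neg hj.not_gt

lemma countGE_descStat {m : ℕ} (x : Fin m → ℝ) :
    countGE (fun j : Fin m => descStat x j) = countGE x := by
  have hperm : (fun j : Fin m => descStat x j) = x ∘ (Fin.revPerm.trans (Tuple.sort x)) := by
    funext j
    rw [descStat, dif_pos j.2]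
    simp only [Function.comp_apply, Equiv.trans_apply, Fin.revPerm_apply]
    congr 2
    ext
    simp only [Fin.val_rev]
    omega
  rw [hperm, countGE_comp_perm]

lemma descStat_orderIso_comp {m : ℕ} (φ : ℝ ≃o ℝ) (x : Fin m → ℝ) {j : ℕ} (hj : j < m) :
    descStat (φ ∘ x) j = φ (descStat x j) := by
  refine eq_of_forall_le_iff fun t => ?_
  rw [← φ.symm_apply_le, le_descStat_iff _ hj, le_descStat_iff _ hj]
  simp only [countGE, Function.comp_apply, φ.symm_apply_le]

lemma measurable_descStat {m : ℕ} (j : ℕ) : Measurable fun x : Fin m → ℝ => descStat x j := by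
  rcases lt_or_ge j m with hj | hj
  · refine measurable_of_Ici fun t => ?_
    have hpre : (fun x : Fin m → ℝ => descStat x j) ⁻¹' Ici t = {x | j < countGE x t} :=
      Set.ext fun x => le_descStat_iff x hj t
    rw [hpre]
    exact measurableSet_lt measurable_const (measurable_countGE t)
  · simp only [descStat_eq_zero _ hj, measurable_const]

lemma refVec_eq_descStat_cons {r : ℕ} {z : Fin r → ℝ} (hz : ∀ i, 0 ≤ z i) :
    refVec (q := r + 1) z = fun j : Fin (r + 1) => descStat (Fin.cons 0 z : Fin (r + 1) → ℝ) j := by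
  funext j
  refine eq_of_forall_le_iff fun t => ?_
  rw [le_descStat_iff _ j.2, countGE_cons]
  change t ≤ descStat z j ↔ _
  rcases le_or_gt t 0 with ht | ht
  · have hle : t ≤ descStat z j := by
      rcases lt_or_ge (j : ℕ) r with hj | hj
      · rwa [le_descStat_iff z hj, countGE_eq_of_forall_le fun i => ht.trans (hz i)]
      · rwa [descStat_eq_zero z hj]
    rw [countGE_eq_of_forall_le fun i => ht.trans (hz i), if_pos ht]
    exact iff_of_true hle j.2
  · rw [if_neg ht.not_ge, add_zero]
    rcases lt_or_ge (j : ℕ) r with hj | hj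
    · exact le_descStat_iff z hj t
    · rw [descStat_eq_zero z hj]
      exact iff_of_false ht.not_ge ((countGE_le z t).trans hj).not_gt

variable {q : ℕ} (K : (Fin q → ℝ) → ℝ)

lemma measurable_Km {K : (Fin q → ℝ) → ℝ} (hK : Measurable K) (m : ℕ) : Measurable (Km K m) :=
  hK.comp (measurable_pi_lambda _ fun _ => measurable_descStat _)

lemma Km_congr {m n : ℕ} (hm : q ≤ m) (hn : q ≤ n) {x : Fin m → ℝ} {y : Fin n → ℝ}
    (h : ∀ t, ∀ j < q, (j < countGE x t ↔ j < countGE y t)) : Km K m x = Km K n y := by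
  refine congrArg K (funext fun j => eq_of_forall_le_iff fun t => ?_)
  rw [le_descStat_iff x (j.2.trans_le hm), le_descStat_iff y (j.2.trans_le hn), h t j j.2]

lemma Km_congr_countGE {m : ℕ} (hm : q ≤ m) {x y : Fin m → ℝ} (h : countGE x = countGE y) :
    Km K m x = Km K m y :=
  Km_congr K hm hm fun t j _ => by rw [h]

lemma Km_comp_perm {m : ℕ} (hm : q ≤ m) (x : Fin m → ℝ) (σ : Equiv.Perm (Fin m)) :
    Km K m (x ∘ σ) = Km K m x :=
  Km_congr_countGE K hm (countGE_comp_perm x σ)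

lemma Km_cons_of_le_countGE {m : ℕ} {a : ℝ} {x : Fin m → ℝ} (h : q ≤ countGE x a) :
    Km K (m + 1) (Fin.cons a x) = Km K m x := by
  have hm : q ≤ m := h.trans (countGE_le x a)
  refine Km_congr K (hm.trans m.le_succ) hm fun t j hj => ?_
  rw [countGE_cons]
  rcases le_or_gt t a with ht | ht
  · have := countGE_antitone x ht
    rw [if_pos ht]
    omega
  · rw [if_neg ht.not_ge, add_zero]

lemma Km_affine {K : (Fin q → ℝ) → ℝ} (hK : LocScaleInvariant K) {m : ℕ} (hm : q ≤ m) {a : ℝ}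
    (ha : 0 < a) (b : ℝ) (x : Fin m → ℝ) : Km K m (fun i => a * x i + b) = Km K m x := by
  let φ : ℝ ≃o ℝ := (OrderIso.mulLeft₀ a ha).trans (OrderIso.addRight b)
  have hφ : ∀ j : Fin q, descStat (fun i => a * x i + b) j = a * descStat x j + b := fun j =>
    descStat_orderIso_comp φ x (j.2.trans_le hm)
  simp only [Km, hφ]
  exact hK a b ha _

end OrderStatistics

section UniformCoordinates

lemma hGamma_one (γ : ℝ) : hGamma γ 1 = 0 := by simp [hGamma]

lemma hGamma_mul (γ : ℝ) {c y : ℝ} (hc : 0 < c) (hy : 0 < y) :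
    hGamma γ (c * y) = c ^ γ * hGamma γ y + hGamma γ c := by
  unfold hGamma
  split_ifs with h
  · rw [h, Real.log_mul hc.ne' hy.ne', Real.rpow_zero, one_mul, add_comm]
  · rw [Real.mul_rpow hc.le hy.le]
    ring

lemma hGamma_nonneg (γ : ℝ) {y : ℝ} (hy : 1 ≤ y) : 0 ≤ hGamma γ y := by
  unfold hGamma
  split_ifs with h
  · exact Real.log_nonneg hy
  · rcases lt_or_gt_of_ne h with h | h
    · exact div_nonneg_of_nonpos (sub_nonpos.2 (Real.rpow_le_one_of_one_le_of_nonpos hy h.le)) h.le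
    · exact div_nonneg (sub_nonneg.2 (Real.one_le_rpow hy h.le)) h.le

lemma hGamma_monotoneOn (γ : ℝ) : MonotoneOn (hGamma γ) (Ioi 0) := by
  intro a (ha : 0 < a) b (hb : 0 < b) hab
  rw [← mul_div_cancel₀ b ha.ne', hGamma_mul γ ha (div_pos hb ha)]
  have := mul_nonneg (Real.rpow_pos_of_pos ha γ).le (hGamma_nonneg γ ((one_le_div ha).2 hab))
  linarith

lemma hGamma_inv_le {γ a b : ℝ} (ha : 0 < a) (hab : a ≤ b) : hGamma γ b⁻¹ ≤ hGamma γ a⁻¹ :=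
  hGamma_monotoneOn γ (inv_pos.2 (ha.trans_le hab)) (inv_pos.2 ha) (inv_anti₀ ha hab)

variable (γ : ℝ) {q : ℕ} (K : (Fin q → ℝ) → ℝ)

/-- The kernel `K_n` as a function of the coordinates `u_i` with `z_i = h_γ(1/u_i)`. As
`u ↦ h_γ(1/u)` is decreasing and carries the uniform distribution to `GP(γ)`, it is a function of
the `q` smallest coordinates, evaluated at uniform variables. -/
def unifKernel (n : ℕ) (u : Fin n → ℝ) : ℝ := Km K n fun i => hGamma γ (u i)⁻¹

lemma measurable_unifKernel {K : (Fin q → ℝ) → ℝ} (hK : Measurable K) (n : ℕ) :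
    Measurable (unifKernel γ K n) :=
  (measurable_Km hK n).comp <| measurable_pi_lambda _ fun i =>
    (measurable_hGamma γ).comp (measurable_pi_apply i).inv

lemma hGamma_inv_cons {n : ℕ} (a : ℝ) (u : Fin n → ℝ) :
    (fun i => hGamma γ ((Fin.cons a u : Fin (n + 1) → ℝ) i)⁻¹) =
      (Fin.cons (hGamma γ a⁻¹) fun i => hGamma γ (u i)⁻¹ : Fin (n + 1) → ℝ) :=
  funext fun i => Fin.cases rfl (fun _ => rfl) i

lemma unifKernel_comp_perm {n : ℕ} (hn : q ≤ n) (u : Fin n → ℝ) (σ : Equiv.Perm (Fin n)) :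
    unifKernel γ K n (u ∘ σ) = unifKernel γ K n u :=
  Km_comp_perm K hn (fun i => hGamma γ (u i)⁻¹) σ

lemma unifKernel_cons_comp_perm {n : ℕ} (hn : q ≤ n + 1) (x : ℝ) (u : Fin n → ℝ)
    (σ : Equiv.Perm (Fin n)) :
    unifKernel γ K (n + 1) (Fin.cons x (u ∘ σ)) = unifKernel γ K (n + 1) (Fin.cons x u) := by
  refine Km_congr_countGE K hn (funext fun t => ?_)
  rw [hGamma_inv_cons, hGamma_inv_cons, countGE_cons, countGE_cons,
    ← countGE_comp_perm (fun i => hGamma γ (u i)⁻¹) σ]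
  rfl

lemma unifKernel_cons_cons_comm {n : ℕ} (hn : q ≤ n + 2) (x y : ℝ) (u : Fin n → ℝ) :
    unifKernel γ K (n + 2) (Fin.cons x (Fin.cons y u)) =
      unifKernel γ K (n + 2) (Fin.cons y (Fin.cons x u)) := by
  refine Km_congr_countGE K hn (funext fun t => ?_)
  simp only [hGamma_inv_cons, countGE_cons]
  exact add_right_comm _ _ _

lemma unifKernel_const_mul {K : (Fin q → ℝ) → ℝ} (hK : LocScaleInvariant K) {n : ℕ} (hn : q ≤ n)
    {c : ℝ} (hc : 0 < c) {u : Fin n → ℝ} (hu : ∀ i, 0 < u i) :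
    unifKernel γ K n (fun i => c * u i) = unifKernel γ K n u := by
  have hc' : 0 < c⁻¹ := inv_pos.2 hc
  simp only [unifKernel, mul_inv, hGamma_mul γ hc' (inv_pos.2 (hu _))]
  exact Km_affine hK hn (Real.rpow_pos_of_pos hc' γ) (hGamma γ c⁻¹) _

lemma unifKernel_cons_of_forall_le {n : ℕ} (hn : q ≤ n) {M : ℝ} {u : Fin n → ℝ}
    (hu : ∀ i, 0 < u i ∧ u i ≤ M) :
    unifKernel γ K (n + 1) (Fin.cons M u) = unifKernel γ K n u := by
  rw [unifKernel, hGamma_inv_cons, Km_cons_of_le_countGE K, unifKernel]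
  rwa [countGE_eq_of_forall_le fun i => hGamma_inv_le (hu i).1 (hu i).2]

lemma unifKernel_cons_cons_of_forall_le {n : ℕ} (hn : q ≤ n) (x : ℝ) {M : ℝ} {u : Fin n → ℝ}
    (hu : ∀ i, 0 < u i ∧ u i ≤ M) :
    unifKernel γ K (n + 2) (Fin.cons x (Fin.cons M u)) =
      unifKernel γ K (n + 1) (Fin.cons x u) := by
  rw [unifKernel_cons_cons_comm γ K (by omega), unifKernel, hGamma_inv_cons,
    Km_cons_of_le_countGE K, unifKernel]
  rw [hGamma_inv_cons, countGE_cons,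
    countGE_eq_of_forall_le fun i => hGamma_inv_le (hu i).1 (hu i).2]
  exact hn.trans (Nat.le_add_right _ _)

lemma refVec_hGamma_inv {r : ℕ} {u : Fin r → ℝ} (hu : ∀ i, u i ∈ Ioo (0 : ℝ) 1) :
    refVec (q := r + 1) (fun i => hGamma γ (u i)⁻¹) = fun j : Fin (r + 1) =>
      descStat (Fin.cons 0 fun i => hGamma γ (u i)⁻¹ : Fin (r + 1) → ℝ) j :=
  refVec_eq_descStat_cons fun i => hGamma_nonneg γ (one_le_inv_iff₀.2 ⟨(hu i).1, (hu i).2.le⟩)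

lemma kernel_refVec_eq_unifKernel {r : ℕ} (K : (Fin (r + 1) → ℝ) → ℝ) {u : Fin r → ℝ}
    (hu : ∀ i, u i ∈ Ioo (0 : ℝ) 1) :
    K (refVec (q := r + 1) fun i => hGamma γ (u i)⁻¹) = unifKernel γ K (r + 1) (Fin.cons 1 u) := by
  rw [refVec_hGamma_inv γ hu, unifKernel, hGamma_inv_cons, inv_one, hGamma_one, Km]

lemma Km_snoc_refVec_eq_unifKernel {r : ℕ} (K : (Fin (r + 1) → ℝ) → ℝ) {u : Fin r → ℝ}
    (hu : ∀ i, u i ∈ Ioo (0 : ℝ) 1) (y : ℝ) :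
    Km K (r + 2) (Fin.snoc (refVec (q := r + 1) fun i => hGamma γ (u i)⁻¹) (hGamma γ y⁻¹)) =
      unifKernel γ K (r + 2) (Fin.cons y (Fin.cons 1 u)) := by
  rw [refVec_hGamma_inv γ hu]
  refine Km_congr_countGE K (Nat.le_succ _) (funext fun t => ?_)
  rw [countGE_snoc, countGE_descStat (Fin.cons 0 _), hGamma_inv_cons, hGamma_inv_cons,
    countGE_cons (hGamma γ y⁻¹), inv_one, hGamma_one]

end UniformCoordinates

section ProductMeasures

variable (μ : Measure ℝ)

lemma measurable_finCons {α : Type*} [MeasurableSpace α] {n : ℕ} {f : α → ℝ} {g : α → Fin n → ℝ}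
    (hf : Measurable f) (hg : Measurable g) :
    Measurable fun a => (Fin.cons (f a) (g a) : Fin (n + 1) → ℝ) :=
  measurable_pi_lambda _ fun i => Fin.cases hf (fun i => (measurable_pi_apply i).comp hg) i

lemma measurable_finSnoc {α : Type*} [MeasurableSpace α] {n : ℕ} {f : α → Fin n → ℝ} {g : α → ℝ}
    (hf : Measurable f) (hg : Measurable g) :
    Measurable fun a => (Fin.snoc (f a) (g a) : Fin (n + 1) → ℝ) :=
  measurable_pi_lambda _ <| Fin.lastCases (by simpa only [Fin.snoc_last] using hg) fun i => by
    simpa only [Fin.snoc_castSucc] using measurable_pi_iff.1 hf i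

lemma measurePreserving_finCons [SigmaFinite μ] (n : ℕ) :
    MeasurePreserving (fun p : ℝ × (Fin n → ℝ) => (Fin.cons p.1 p.2 : Fin (n + 1) → ℝ))
      (μ.prod (Measure.pi fun _ => μ)) (Measure.pi fun _ => μ) := by
  convert (measurePreserving_piFinSuccAbove (fun _ : Fin (n + 1) => μ) 0).symm with p
  exact (Fin.insertNth_zero' p.1 p.2).symm

lemma lintegral_pi_succ [SigmaFinite μ] {n : ℕ} {F : (Fin (n + 1) → ℝ) → ℝ≥0∞}
    (hF : Measurable F) :
    ∫⁻ u, F u ∂Measure.pi (fun _ => μ) =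
      ∫⁻ s, ∫⁻ v, F (Fin.cons s v) ∂Measure.pi (fun _ : Fin n => μ) ∂μ := by
  have h := measurePreserving_finCons μ n
  rw [← h.lintegral_comp hF]
  exact lintegral_prod _ (hF.comp h.measurable).aemeasurable

lemma lintegral_pi_comp_perm [SigmaFinite μ] {n : ℕ} (σ : Equiv.Perm (Fin n))
    (F : (Fin n → ℝ) → ℝ≥0∞) :
    ∫⁻ u, F (u ∘ σ) ∂Measure.pi (fun _ => μ) = ∫⁻ u, F u ∂Measure.pi fun _ => μ :=
  (measurePreserving_arrowCongr' (fun _ => μ) (fun _ => μ) σ.symm (MeasurableEquiv.refl ℝ)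
    fun _ => MeasurePreserving.id μ).lintegral_comp_emb (MeasurableEquiv.measurableEmbedding _) F

lemma ae_pi_injective [IsProbabilityMeasure μ] [NullSingletonClass μ] (n : ℕ) :
    ∀ᵐ u ∂Measure.pi (fun _ : Fin n => μ), Function.Injective u := by
  suffices h : ∀ i j : Fin n, i ≠ j → ∀ᵐ u ∂Measure.pi (fun _ : Fin n => μ), u i ≠ u j by
    have h' := ae_all_iff.2 fun i => ae_all_iff.2 fun j => ae_all_iff.2 fun hij => h i j hij
    filter_upwards [h'] with u hu i j hij
    by_contra hne
    exact hu i j hne hij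
  intro i j hij
  have hindep := (iIndepFun_pi (μ := fun _ : Fin n => μ) (X := fun _ x => x)
    fun _ => aemeasurable_id).indepFun hij
  have hmap : (Measure.pi fun _ : Fin n => μ).map (fun u => (u i, u j)) = μ.prod μ := by
    rw [(indepFun_iff_map_prod_eq_prod_map_map (measurable_pi_apply i).aemeasurable
      (measurable_pi_apply j).aemeasurable).1 hindep,
      (measurePreserving_eval (fun _ : Fin n => μ) i).map_eq,
      (measurePreserving_eval (fun _ : Fin n => μ) j).map_eq]
  have hdiag : MeasurableSet {p : ℝ × ℝ | p.1 ≠ p.2} :=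
    (measurableSet_eq_fun measurable_fst measurable_snd).compl
  have hprod : ∀ᵐ p ∂μ.prod μ, p.1 ≠ p.2 :=
    (Measure.ae_prod_iff_ae_ae hdiag).2 <| ae_of_all _ fun x =>
      (measure_eq_zero_iff_ae_notMem.1 (measure_singleton x)).mono fun y hy h => hy h.symm
  rw [← hmap] at hprod
  exact ae_of_ae_map (f := fun u : Fin n → ℝ => (u i, u j)) (by fun_prop) hprod

lemma lintegral_indicator_argmax_eq [SigmaFinite μ] {n : ℕ} {F : (Fin (n + 1) → ℝ) → ℝ≥0∞}
    (hsymm : ∀ u (σ : Equiv.Perm (Fin (n + 1))), F (u ∘ σ) = F u) (i : Fin (n + 1)) :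
    ∫⁻ u, {u | ∀ j ≠ i, u j < u i}.indicator F u ∂Measure.pi (fun _ => μ) =
      ∫⁻ u, {u | ∀ j ≠ 0, u j < u 0}.indicator F u ∂Measure.pi (fun _ => μ) := by
  rw [← lintegral_pi_comp_perm μ (Equiv.swap 0 i)]
  congr 1 with u
  have hmem : u ∘ Equiv.swap 0 i ∈ {u : Fin (n + 1) → ℝ | ∀ j ≠ i, u j < u i} ↔
      u ∈ {u : Fin (n + 1) → ℝ | ∀ j ≠ 0, u j < u 0} := by
    simp only [mem_ofPred_eq, Function.comp_apply, Equiv.swap_apply_right]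
    refine (Equiv.swap 0 i).forall_congr fun j => imp_congr (not_congr ?_) Iff.rfl
    rw [Equiv.swap_apply_eq_iff, Equiv.swap_apply_left]
  exact indicator_eq_indicator hmem (hsymm u _)

lemma lintegral_pi_eq_mul_lintegral_max [IsProbabilityMeasure μ] [NullSingletonClass μ] {n : ℕ}
    {F : (Fin (n + 1) → ℝ) → ℝ≥0∞} (hF : Measurable F)
    (hsymm : ∀ u (σ : Equiv.Perm (Fin (n + 1))), F (u ∘ σ) = F u) :
    ∫⁻ u, F u ∂Measure.pi (fun _ => μ) = (n + 1 : ℕ) *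
      ∫⁻ s, ∫⁻ v in {v | ∀ i, v i < s}, F (Fin.cons s v) ∂Measure.pi (fun _ : Fin n => μ) ∂μ := by
  let A : Fin (n + 1) → Set (Fin (n + 1) → ℝ) := fun i => {u | ∀ j ≠ i, u j < u i}
  have hA : ∀ i, MeasurableSet (A i) := fun i => by measurability
  have hsum : ∀ᵐ u ∂Measure.pi (fun _ : Fin (n + 1) => μ), F u = ∑ i, (A i).indicator F u := by
    filter_upwards [ae_pi_injective μ (n + 1)] with u hu
    obtain ⟨i, hi⟩ := Finite.exists_max u
    rw [Finset.sum_eq_single i (fun k _ hk => indicator_of_notMem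
      (fun hmem => (hmem i hk.symm).not_ge (hi k)) F) (fun h => absurd (Finset.mem_univ i) h)]
    exact (indicator_of_mem (show u ∈ A i from fun j hj => (hi j).lt_of_ne (hu.ne hj)) F).symm
  rw [lintegral_congr_ae hsum, lintegral_finsetSum _ fun i _ => hF.indicator (hA i),
    Finset.sum_congr rfl fun i _ => lintegral_indicator_argmax_eq μ hsymm i, Finset.sum_const,
    Finset.card_univ, Fintype.card_fin, nsmul_eq_mul, lintegral_pi_succ μ (hF.indicator (hA 0))]
  congr 2 with s
  rw [← lintegral_indicator (by measurability)]
  congr 1 with v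
  have hmem : (Fin.cons s v : Fin (n + 1) → ℝ) ∈ A 0 ↔ ∀ i, v i < s := by
    simp only [A, mem_ofPred_eq, Fin.forall_fin_succ, Fin.cons_zero, Fin.cons_succ, ne_eq,
      not_true_eq_false, false_implies, Fin.succ_ne_zero, not_false_eq_true, true_implies, true_and]
  exact indicator_eq_indicator hmem rfl

end ProductMeasures

section UniformSamples

/-- The law of `n` independent uniform variables on `(0,1)`. -/
def unifPi (n : ℕ) : Measure (Fin n → ℝ) := Measure.pi fun _ => unif01

instance (n : ℕ) : IsProbabilityMeasure (unifPi n) := by unfold unifPi; infer_instance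

instance : NullSingletonClass unif01 := by unfold unif01; infer_instance

lemma ae_mem_Ioo_unif01 : ∀ᵐ s ∂unif01, s ∈ Ioo (0 : ℝ) 1 := ae_restrict_mem measurableSet_Ioo

lemma ae_mem_Ioo_unifPi (n : ℕ) : ∀ᵐ u ∂unifPi n, ∀ i, u i ∈ Ioo (0 : ℝ) 1 :=
  ae_all_iff.2 fun _ => Measure.tendsto_eval_ae_ae.eventually ae_mem_Ioo_unif01

lemma unifPi_eq_restrict (n : ℕ) :
    unifPi n = volume.restrict (univ.pi fun _ : Fin n => Ioo (0 : ℝ) 1) := by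
  simp only [unifPi, unif01, volume_pi, Measure.restrict_pi_pi]

lemma map_const_mul_unifPi (n : ℕ) {s : ℝ} (hs : 0 < s) :
    (unifPi n).map (fun v i => s * v i) =
      ENNReal.ofReal (s ^ n)⁻¹ • volume.restrict (univ.pi fun _ : Fin n => Ioo 0 s) := by
  have hemb : MeasurableEmbedding fun v : Fin n → ℝ => s • v :=
    (Homeomorph.smulOfNeZero s hs.ne').measurableEmbedding
  have hpre : (fun v : Fin n → ℝ => s • v) ⁻¹' (univ.pi fun _ => Ioo 0 s) =
      univ.pi fun _ => Ioo 0 1 := by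
    ext v
    simp only [mem_preimage, mem_univ_pi, Pi.smul_apply, smul_eq_mul, mem_Ioo,
      mul_pos_iff_of_pos_left hs, mul_lt_iff_lt_one_right hs]
  rw [unifPi_eq_restrict, ← hpre]
  change Measure.map (fun v : Fin n → ℝ => s • v) _ = _
  rw [← hemb.restrict_map, Measure.map_addHaar_smul _ hs.ne', Module.finrank_fin_fun,
    abs_of_pos (by positivity), Measure.restrict_smul]

lemma setLIntegral_lt_unifPi {n : ℕ} {s : ℝ} (hs : s ∈ Ioo (0 : ℝ) 1) {F : (Fin n → ℝ) → ℝ≥0∞}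
    (hF : Measurable F) :
    ∫⁻ v in {v | ∀ i, v i < s}, F v ∂unifPi n =
      ENNReal.ofReal (s ^ n) * ∫⁻ v, F (fun i => s * v i) ∂unifPi n := by
  have hpos : 0 < s ^ n := pow_pos hs.1 n
  have hset : {v : Fin n → ℝ | ∀ i, v i < s} ∩ univ.pi (fun _ => Ioo 0 1) =
      univ.pi fun _ => Ioo 0 s := by
    ext v
    simp only [mem_inter_iff, mem_ofPred_eq, mem_univ_pi, mem_Ioo, ← forall_and]
    exact forall_congr' fun i => ⟨fun h => ⟨h.2.1, h.1⟩, fun h => ⟨h.2, h.1, h.2.trans hs.2⟩⟩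
  have hmap : ∫⁻ v, F (fun i => s * v i) ∂unifPi n = ∫⁻ v, F v ∂(unifPi n).map fun v i => s * v i :=
    (lintegral_map hF (by fun_prop)).symm
  rw [hmap, map_const_mul_unifPi n hs.1,
    lintegral_smul_measure, smul_eq_mul, ← mul_assoc, ← ENNReal.ofReal_mul hpos.le,
    mul_inv_cancel₀ hpos.ne', ENNReal.ofReal_one, one_mul, unifPi_eq_restrict,
    Measure.restrict_restrict (by measurability), hset]

lemma lintegral_unifPi_succ_of_symmetric {n : ℕ} {F : (Fin (n + 1) → ℝ) → ℝ≥0∞}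
    (hF : Measurable F) (hsymm : ∀ u (σ : Equiv.Perm (Fin (n + 1))), F (u ∘ σ) = F u) :
    ∫⁻ u, F u ∂unifPi (n + 1) = ∫⁻ s, ENNReal.ofReal ((n + 1) * s ^ n) *
      ∫⁻ v, F (Fin.cons s fun i => s * v i) ∂unifPi n ∂unif01 := by
  have hn : ((n + 1 : ℕ) : ℝ≥0∞) = ENNReal.ofReal (n + 1) := by
    rw [← Nat.cast_succ, ENNReal.ofReal_natCast]
  rw [unifPi, lintegral_pi_eq_mul_lintegral_max unif01 hF hsymm, hn,
    ← lintegral_const_mul' _ _ ENNReal.ofReal_ne_top]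
  refine lintegral_congr_ae (ae_mem_Ioo_unif01.mono fun s hs => ?_)
  dsimp only
  rw [ENNReal.ofReal_mul (by positivity), mul_assoc]
  exact congrArg _ (setLIntegral_lt_unifPi hs
    (hF.comp (measurable_finCons measurable_const measurable_id)))

/-- The density of the `(r+1)`-st smallest of `r + 1 + k` independent uniform variables. -/
def betaDensity (r k : ℕ) (t : ℝ) : ℝ :=
  (r + k + 1).factorial / (r.factorial * k.factorial) * t ^ r * (1 - t) ^ k

@[fun_prop]
lemma measurable_betaDensity (r k : ℕ) : Measurable (betaDensity r k) := by
  unfold betaDensity; fun_prop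

lemma betaDensity_nonneg (r k : ℕ) {t : ℝ} (ht : t ∈ Icc (0 : ℝ) 1) : 0 ≤ betaDensity r k t :=
  mul_nonneg (mul_nonneg (by positivity) (pow_nonneg ht.1 r)) (pow_nonneg (sub_nonneg.2 ht.2) k)

lemma betaDensity_zero_right (r : ℕ) (t : ℝ) : betaDensity r 0 t = (r + 1) * t ^ r := by
  have hr : (r.factorial : ℝ) ≠ 0 := by positivity
  rw [betaDensity, add_zero, Nat.factorial_succ]
  push_cast [Nat.factorial_zero]
  field_simp

lemma pow_mul_betaDensity_div (r k : ℕ) {s : ℝ} (hs : s ≠ 0) (ρ : ℝ) :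
    s ^ (r + k) * betaDensity r k (ρ / s) =
      (r + k + 1).factorial / (r.factorial * k.factorial) * ρ ^ r * (s - ρ) ^ k := by
  rw [betaDensity, one_sub_div hs, div_pow, div_pow, pow_add]
  field_simp

lemma integral_betaDensity_div (r k : ℕ) {ρ : ℝ} (hρ : ρ ∈ Ioo (0 : ℝ) 1) :
    ∫ s in Ioo ρ 1, (r + k + 2) * (s ^ (r + k) * betaDensity r k (ρ / s)) =
      betaDensity r (k + 1) ρ := by
  have hpow : ∫ s in Ioo ρ 1, (s - ρ) ^ k = (1 - ρ) ^ (k + 1) / (k + 1) := by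
    rw [← integral_Ioc_eq_integral_Ioo, ← intervalIntegral.integral_of_le hρ.2.le,
      intervalIntegral.integral_comp_sub_right (fun s => s ^ k), integral_pow, sub_self,
      zero_pow k.succ_ne_zero, sub_zero]
  rw [setIntegral_congr_fun measurableSet_Ioo fun s hs => congrArg _
    (pow_mul_betaDensity_div r k (hρ.1.trans hs.1).ne' ρ), integral_const_mul, integral_const_mul,
    hpow, betaDensity, Nat.factorial_succ k, ← add_assoc, Nat.factorial_succ (r + k + 1)]
  push_cast
  field_simp
  ring

lemma lintegral_betaDensity_div (r k : ℕ) {ρ : ℝ} (hρ : ρ ∈ Ioo (0 : ℝ) 1) :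
    ∫⁻ s in Ioo ρ 1, ENNReal.ofReal ((r + k + 2) * (s ^ (r + k) * betaDensity r k (ρ / s))) =
      ENNReal.ofReal (betaDensity r (k + 1) ρ) := by
  rw [← integral_betaDensity_div r k hρ, ofReal_integral_eq_lintegral_ofReal]
  · have hcont : Continuous fun s => (r + k + 2 : ℝ) *
        ((r + k + 1).factorial / (r.factorial * k.factorial) * ρ ^ r * (s - ρ) ^ k) := by fun_prop
    exact ((hcont.integrableOn_Icc (a := ρ) (b := 1)).mono_set Ioo_subset_Icc_self).congr_fun
      (fun s hs => by rw [pow_mul_betaDensity_div r k (hρ.1.trans hs.1).ne'])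
      measurableSet_Ioo
  · refine (ae_restrict_mem measurableSet_Ioo).mono fun s hs => ?_
    have hs0 : 0 < s := hρ.1.trans hs.1
    have := betaDensity_nonneg r k (t := ρ / s)
      ⟨(div_pos hρ.1 hs0).le, (div_le_one hs0).2 hs.1.le⟩
    simp only [Pi.zero_apply]
    positivity

lemma ofReal_mul_setLIntegral_comp_const_mul {c : ℝ} (hc : 0 < c) (A : Set ℝ) (f : ℝ → ℝ≥0∞) :
    ENNReal.ofReal c * ∫⁻ t in (c * ·) ⁻¹' A, f (c * t) = ∫⁻ ρ in A, f ρ := by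
  have hemb : MeasurableEmbedding (c * · : ℝ → ℝ) :=
    (Homeomorph.mulLeft₀ c hc.ne').measurableEmbedding
  conv_rhs => rw [← Real.smul_map_volume_mul_left hc.ne']
  rw [Measure.restrict_smul, lintegral_smul_measure, hemb.restrict_map, hemb.lintegral_map,
    abs_of_pos hc, smul_eq_mul]

lemma lintegral_triangle_swap {H : ℝ → ℝ → ℝ≥0∞} (hH : Measurable (Function.uncurry H)) :
    ∫⁻ s, (∫⁻ ρ in Ioo 0 s, H s ρ) ∂unif01 = ∫⁻ ρ, (∫⁻ s in Ioo ρ 1, H s ρ) ∂unif01 := by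
  have hA : MeasurableSet {p : ℝ × ℝ | p.2 < p.1} := measurableSet_lt measurable_snd measurable_fst
  let G : ℝ → ℝ → ℝ≥0∞ := fun s ρ => {p : ℝ × ℝ | p.2 < p.1}.indicator (Function.uncurry H) (s, ρ)
  have hleft : ∀ s ∈ Ioo (0 : ℝ) 1, ∫⁻ ρ in Ioo 0 s, H s ρ = ∫⁻ ρ, G s ρ ∂unif01 := by
    intro s hs
    rw [show Ioo 0 s = Iio s ∩ Ioo 0 1 by rw [inter_comm, Ioo_inter_Iio, min_eq_right hs.2.le],
      ← setLIntegral_indicator measurableSet_Iio]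
    rfl
  have hright : ∀ ρ ∈ Ioo (0 : ℝ) 1, ∫⁻ s in Ioo ρ 1, H s ρ = ∫⁻ s, G s ρ ∂unif01 := by
    intro ρ hρ
    rw [show Ioo ρ 1 = Ioi ρ ∩ Ioo 0 1 by rw [inter_comm, Ioo_inter_Ioi, max_eq_right hρ.1.le],
      ← setLIntegral_indicator measurableSet_Ioi]
    rfl
  calc ∫⁻ s, (∫⁻ ρ in Ioo 0 s, H s ρ) ∂unif01
      = ∫⁻ s, ∫⁻ ρ, G s ρ ∂unif01 ∂unif01 := lintegral_congr_ae (ae_mem_Ioo_unif01.mono hleft)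
    _ = ∫⁻ ρ, ∫⁻ s, G s ρ ∂unif01 ∂unif01 :=
        lintegral_lintegral_swap (hH.indicator hA).aemeasurable
    _ = ∫⁻ ρ, (∫⁻ s in Ioo ρ 1, H s ρ) ∂unif01 :=
        (lintegral_congr_ae (ae_mem_Ioo_unif01.mono hright)).symm

lemma lintegral_unif01_mul_comp_mul {f g Φ : ℝ → ℝ≥0∞} (hf : Measurable f) (hg : Measurable g)
    (hΦ : Measurable Φ) :
    ∫⁻ s, f s * ∫⁻ t, g t * Φ (s * t) ∂unif01 ∂unif01 =
      ∫⁻ ρ, (∫⁻ s in Ioo ρ 1, f s * ENNReal.ofReal s⁻¹ * g (ρ / s)) * Φ ρ ∂unif01 := by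
  have hscale : ∀ s ∈ Ioo (0 : ℝ) 1, f s * ∫⁻ t, g t * Φ (s * t) ∂unif01 =
      ∫⁻ ρ in Ioo 0 s, f s * ENNReal.ofReal s⁻¹ * g (ρ / s) * Φ ρ := by
    intro s hs
    have hpre : (s * ·) ⁻¹' Ioo 0 s = Ioo (0 : ℝ) 1 := by
      rw [preimage_const_mul_Ioo₀ _ _ hs.1, zero_div, div_self hs.1.ne']
    rw [← ofReal_mul_setLIntegral_comp_const_mul hs.1, hpre]
    have hinv : ENNReal.ofReal s * ENNReal.ofReal s⁻¹ = 1 := by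
      rw [← ENNReal.ofReal_mul hs.1.le, mul_inv_cancel₀ hs.1.ne', ENNReal.ofReal_one]
    simp only [mul_div_cancel_left₀ _ hs.1.ne', mul_assoc]
    rw [lintegral_const_mul _ (by fun_prop), lintegral_const_mul _ (by fun_prop),
      mul_left_comm, ← mul_assoc (ENNReal.ofReal s), hinv, one_mul, unif01]
  calc ∫⁻ s, f s * ∫⁻ t, g t * Φ (s * t) ∂unif01 ∂unif01
      = ∫⁻ s, (∫⁻ ρ in Ioo 0 s, f s * ENNReal.ofReal s⁻¹ * g (ρ / s) * Φ ρ) ∂unif01 :=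
        lintegral_congr_ae (ae_mem_Ioo_unif01.mono hscale)
    _ = ∫⁻ ρ, (∫⁻ s in Ioo ρ 1, f s * ENNReal.ofReal s⁻¹ * g (ρ / s) * Φ ρ) ∂unif01 :=
        lintegral_triangle_swap (H := fun s ρ => f s * ENNReal.ofReal s⁻¹ * g (ρ / s) * Φ ρ)
          (by fun_prop)
    _ = ∫⁻ ρ, (∫⁻ s in Ioo ρ 1, f s * ENNReal.ofReal s⁻¹ * g (ρ / s)) * Φ ρ ∂unif01 :=
        lintegral_congr fun ρ => lintegral_mul_const _ (by fun_prop)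

/-- A family of functions of samples of every size that depend only on the `r + 1` smallest entries:
from size `r + 1` on, they are symmetric and an entry above all the others can be removed. -/
structure IsLowerStatistic (r : ℕ) (F : ∀ n, (Fin n → ℝ) → ℝ≥0∞) : Prop where
  measurable : ∀ n, Measurable (F n)
  comp_perm : ∀ {n}, r + 1 ≤ n → ∀ u (σ : Equiv.Perm (Fin n)), F n (u ∘ σ) = F n u
  cons_max : ∀ {n}, r + 1 ≤ n → ∀ {M} {u : Fin n → ℝ}, (∀ i, 0 < u i ∧ u i ≤ M) →
    F (n + 1) (Fin.cons M u) = F n u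

lemma IsLowerStatistic.comp_const_mul {r : ℕ} {F : ∀ n, (Fin n → ℝ) → ℝ≥0∞}
    (hF : IsLowerStatistic r F) {s : ℝ} (hs : 0 < s) :
    IsLowerStatistic r fun n u => F n fun i => s * u i where
  measurable n := (hF.measurable n).comp (by fun_prop)
  comp_perm hn u σ := hF.comp_perm hn (fun i => s * u i) σ
  cons_max {n} hn M u hu := by
    rw [← hF.cons_max hn (M := s * M) fun i =>
      ⟨mul_pos hs (hu i).1, mul_le_mul_of_nonneg_left (hu i).2 hs.le⟩]
    exact congrArg _ (funext fun i => Fin.cases rfl (fun _ => rfl) i)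

lemma IsLowerStatistic.lintegral_cons_max_const_mul {r : ℕ} {F : ∀ n, (Fin n → ℝ) → ℝ≥0∞}
    (hF : IsLowerStatistic r F) (k : ℕ) {s : ℝ} (hs : 0 < s) :
    ∫⁻ v, F (r + 1 + k + 1) (Fin.cons s fun i => s * v i) ∂unifPi (r + 1 + k) =
      ∫⁻ v, F (r + 1 + k) (fun i => s * v i) ∂unifPi (r + 1 + k) :=
  lintegral_congr_ae <| (ae_mem_Ioo_unifPi _).mono fun _ hv =>
    hF.cons_max (Nat.le_add_right _ _) fun i =>
      ⟨mul_pos hs (hv i).1, mul_le_of_le_one_right hs.le (hv i).2.le⟩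

lemma IsLowerStatistic.lintegral_unifPi {r : ℕ} {F : ∀ n, (Fin n → ℝ) → ℝ≥0∞}
    (hF : IsLowerStatistic r F) (k : ℕ) :
    ∫⁻ u, F (r + 1 + k) u ∂unifPi (r + 1 + k) = ∫⁻ t, ENNReal.ofReal (betaDensity r k t) *
      ∫⁻ v, F (r + 1) (Fin.cons t fun i => t * v i) ∂unifPi r ∂unif01 := by
  induction k generalizing F with
  | zero =>
    simp only [betaDensity_zero_right]
    exact lintegral_unifPi_succ_of_symmetric (hF.measurable _) (hF.comp_perm le_rfl)
  | succ k ih =>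
    have hΦ : Measurable fun ρ => ∫⁻ v, F (r + 1) (Fin.cons ρ fun i => ρ * v i) ∂unifPi r :=
      Measurable.lintegral_prod_right' (f := fun p : ℝ × (Fin r → ℝ) =>
        F (r + 1) (Fin.cons p.1 fun i => p.1 * p.2 i)) <|
        (hF.measurable _).comp (measurable_finCons measurable_fst (by fun_prop))
    have hstep : ∀ s ∈ Ioo (0 : ℝ) 1,
        ∫⁻ v, F (r + 1 + k + 1) (Fin.cons s fun i => s * v i) ∂unifPi (r + 1 + k) =
          ∫⁻ t, ENNReal.ofReal (betaDensity r k t) *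
            ∫⁻ v, F (r + 1) (Fin.cons (s * t) fun i => s * t * v i) ∂unifPi r ∂unif01 := by
      intro s hs
      rw [hF.lintegral_cons_max_const_mul k hs.1, ih (hF.comp_const_mul hs.1)]
      refine lintegral_congr fun t => congrArg _ (lintegral_congr fun v => congrArg _ ?_)
      exact funext fun i => Fin.cases rfl (fun i => (mul_assoc s t (v i)).symm) i
    rw [← add_assoc, lintegral_unifPi_succ_of_symmetric (hF.measurable _)
      (hF.comp_perm (by omega)), lintegral_congr_ae (ae_mem_Ioo_unif01.mono fun s hs =>
      congrArg _ (hstep s hs)), lintegral_unif01_mul_comp_mul (by fun_prop) (by fun_prop) hΦ]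
    refine lintegral_congr_ae (ae_mem_Ioo_unif01.mono fun ρ hρ => ?_)
    dsimp only
    rw [← lintegral_betaDensity_div r k hρ]
    refine congrArg (· * _) (setLIntegral_congr_fun measurableSet_Ioo fun s hs => ?_)
    have hs0 : 0 < s := hρ.1.trans hs.1
    rw [← ENNReal.ofReal_mul (by positivity), ← ENNReal.ofReal_mul (by positivity)]
    congr 1
    push_cast
    rw [add_right_comm r 1 k, pow_succ]
    field_simp
    ring

end UniformSamples

section Laws

lemma map_restrict_image_of_leftInvOn {f f' g : ℝ → ℝ} {s : Set ℝ} (hs : MeasurableSet s)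
    (hf : ∀ x ∈ s, HasDerivWithinAt f (f' x) s x) (hf' : Measurable f') (hg : Measurable g)
    (hgf : LeftInvOn g f s) :
    (volume.restrict (f '' s)).map g =
      (volume.restrict s).withDensity fun x => ENNReal.ofReal |f' x| := by
  refine Measure.ext_of_lintegral _ fun F hF => ?_
  rw [lintegral_map hF hg, lintegral_image_eq_lintegral_abs_deriv_mul hs hf hgf.injOn,
    lintegral_withDensity_eq_lintegral_mul _ (by fun_prop) hF]
  exact setLIntegral_congr_fun hs fun x hx => by simp only [hgf hx, Pi.mul_apply]

lemma map_inv_unif01 : unif01.map (·⁻¹) = pareto1 := by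
  have himage : (·⁻¹) '' Ioi (1 : ℝ) = Ioo 0 1 := by
    rw [image_inv_eq_inv, inv_Ioi₀ one_pos, inv_one]
  have hpdf : paretoPDF 1 1 =
      (Ici (1 : ℝ)).indicator fun x => ENNReal.ofReal |-(x ^ 2)⁻¹| := by
    ext x
    by_cases hx : 1 ≤ x
    · have hx0 : 0 ≤ x := zero_le_one.trans hx
      rw [indicator_of_mem (mem_Ici.2 hx), paretoPDF_of_le hx, abs_neg,
        abs_of_nonneg (by positivity), Real.one_rpow, Real.rpow_neg hx0, one_mul, one_mul]
      norm_num
    · rw [indicator_of_notMem (by simpa using hx), paretoPDF_of_lt (not_le.1 hx)]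
  rw [unif01, ← himage, map_restrict_image_of_leftInvOn measurableSet_Ioi
    (fun x hx => (hasDerivAt_inv (one_pos.trans hx).ne').hasDerivWithinAt) (by fun_prop)
    measurable_inv (fun x _ => inv_inv x), pareto1, paretoMeasure, hpdf,
    withDensity_indicator measurableSet_Ici, restrict_Ioi_eq_restrict_Ici]

lemma gpMeasure_eq_map_unif01 (γ : ℝ) : gpMeasure γ = unif01.map fun u => hGamma γ u⁻¹ := by
  rw [gpMeasure, ← map_inv_unif01, Measure.map_map (measurable_hGamma γ) measurable_inv]
  rfl

lemma measurable_hGamma_inv_pi (γ : ℝ) (n : ℕ) :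
    Measurable fun (u : Fin n → ℝ) i => hGamma γ (u i)⁻¹ :=
  measurable_pi_lambda _ fun i => (measurable_hGamma γ).comp (measurable_pi_apply i).inv

lemma gpPi_eq_map_unifPi (γ : ℝ) (n : ℕ) :
    gpPi γ n = (unifPi n).map fun u i => hGamma γ (u i)⁻¹ := by
  have hmeas : Measurable fun u => hGamma γ u⁻¹ := (measurable_hGamma γ).comp measurable_inv
  have := Measure.isProbabilityMeasure_map (μ := unif01) hmeas.aemeasurable
  rw [gpPi, gpMeasure_eq_map_unif01, unifPi, Measure.pi_map_pi fun _ => hmeas.aemeasurable]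

lemma measurePreserving_hGamma_inv_pi (γ : ℝ) (n : ℕ) :
    MeasurePreserving (fun (u : Fin n → ℝ) i => hGamma γ (u i)⁻¹) (unifPi n) (gpPi γ n) :=
  ⟨measurable_hGamma_inv_pi γ n, (gpPi_eq_map_unifPi γ n).symm⟩

/-- The density on `(0,∞)` of the sum of `r + 1` independent unit exponential variables. -/
def erlangDensity (r : ℕ) (t : ℝ) : ℝ := t ^ r * rexp (-t) / r.factorial

@[fun_prop]
lemma measurable_erlangDensity (r : ℕ) : Measurable (erlangDensity r) := by
  unfold erlangDensity; fun_prop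

lemma erlangDensity_nonneg (r : ℕ) {t : ℝ} (ht : 0 ≤ t) : 0 ≤ erlangDensity r t := by
  unfold erlangDensity; positivity

lemma expMeasure1_eq_withDensity :
    expMeasure1 = (volume.restrict (Ioi 0)).withDensity fun t => ENNReal.ofReal (rexp (-t)) := by
  have himage : (fun t => rexp (-t)) '' Ioi 0 = Ioo 0 1 := by
    rw [← Function.comp_def, image_comp, image_neg_Ioi, neg_zero, Real.image_exp_Iio, Real.exp_zero]
  have hderiv (t : ℝ) : HasDerivAt (fun t => rexp (-t)) (-rexp (-t)) t := by
    simpa using (hasDerivAt_neg t).exp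
  rw [expMeasure1, unif01, ← himage, map_restrict_image_of_leftInvOn measurableSet_Ioi
    (fun t _ => (hderiv t).hasDerivWithinAt) (by fun_prop) (by fun_prop)
    (fun t _ => by rw [Real.log_exp, neg_neg])]
  simp only [abs_neg, Real.abs_exp]

lemma erlangMeasure_zero : erlangMeasure 0 = Measure.dirac 0 := by
  rw [erlangMeasure, Measure.pi_of_empty, Measure.map_dirac' (by fun_prop), Finset.univ_eq_empty,
    Finset.sum_empty]

lemma erlangMeasure_succ (n : ℕ) : erlangMeasure (n + 1) = expMeasure1 ∗ erlangMeasure n := by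
  have hprod : expMeasure1.prod (erlangMeasure n) =
      (expMeasure1.prod (Measure.pi fun _ : Fin n => expMeasure1)).map
        (Prod.map id fun e => ∑ i, e i) := by
    rw [← Measure.map_prod_map _ _ measurable_id (by fun_prop), Measure.map_id, erlangMeasure]
  rw [Measure.conv, hprod, Measure.map_map (by fun_prop) (by fun_prop), erlangMeasure,
    ← (measurePreserving_finCons expMeasure1 n).map_eq,
    Measure.map_map (by fun_prop) (measurePreserving_finCons expMeasure1 n).measurable]
  congr 1
  ext p
  simp only [Function.comp_apply, Fin.sum_cons, Prod.map_fst, Prod.map_snd, id_eq]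

lemma integral_exp_neg_mul_erlangDensity_sub (r : ℕ) {x : ℝ} (hx : 0 ≤ x) :
    ∫ s in Ioc 0 x, rexp (-s) * erlangDensity r (x - s) = erlangDensity (r + 1) x := by
  have hintegrand (s : ℝ) : rexp (-s) * erlangDensity r (x - s) =
      rexp (-x) / r.factorial * (x - s) ^ r := by
    rw [erlangDensity, show -x = -s + -(x - s) by ring, Real.exp_add]
    ring
  simp only [hintegrand]
  rw [← intervalIntegral.integral_of_le hx, intervalIntegral.integral_const_mul,
    intervalIntegral.integral_comp_sub_left (fun s => s ^ r), sub_self, sub_zero, integral_pow,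
    zero_pow r.succ_ne_zero, sub_zero, erlangDensity, Nat.factorial_succ]
  push_cast
  field_simp

lemma lconvolution_exp_neg_erlangDensity (r : ℕ) :
    ((Ioi 0).indicator fun t => ENNReal.ofReal (rexp (-t))) ⋆ₗ[volume]
        ((Ici 0).indicator fun t => ENNReal.ofReal (erlangDensity r t)) =
      (Ici 0).indicator fun t => ENNReal.ofReal (erlangDensity (r + 1) t) := by
  ext x
  have hintegrand (s : ℝ) : (Ioi 0).indicator (fun t => ENNReal.ofReal (rexp (-t))) s *
        (Ici 0).indicator (fun t => ENNReal.ofReal (erlangDensity r t)) (-s + x) =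
      (Ioc 0 x).indicator (fun s => ENNReal.ofReal (rexp (-s) * erlangDensity r (x - s))) s := by
    by_cases hs : 0 < s <;> by_cases hsx : s ≤ x <;>
      simp [hs, hsx, neg_add_eq_sub, ENNReal.ofReal_mul (Real.exp_pos _).le]
  rw [lconvolution_def, lintegral_congr hintegrand, lintegral_indicator measurableSet_Ioc]
  by_cases hx : 0 ≤ x
  · rw [indicator_of_mem (mem_Ici.2 hx), ← integral_exp_neg_mul_erlangDensity_sub r hx,
      ofReal_integral_eq_lintegral_ofReal]
    · unfold erlangDensity
      exact (Continuous.integrableOn_Icc (by fun_prop)).mono_set Ioc_subset_Icc_self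
    · exact (ae_restrict_mem measurableSet_Ioc).mono fun s hs =>
        mul_nonneg (Real.exp_pos _).le (erlangDensity_nonneg r (sub_nonneg.2 hs.2))
  · rw [indicator_of_notMem (by simpa using hx), Ioc_eq_empty (by linarith),
      Measure.restrict_empty, lintegral_zero_measure]

lemma erlangMeasure_eq_withDensity (r : ℕ) : erlangMeasure (r + 1) =
    (volume.restrict (Ioi 0)).withDensity fun t => ENNReal.ofReal (erlangDensity r t) := by
  induction r with
  | zero =>
    simp only [erlangMeasure_succ, erlangMeasure_zero, Measure.conv_dirac_zero,
      expMeasure1_eq_withDensity, erlangDensity, pow_zero, one_mul, Nat.factorial_zero,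
      Nat.cast_one, div_one]
  | succ r ih =>
    rw [erlangMeasure_succ, ih, expMeasure1_eq_withDensity,
      ← withDensity_indicator measurableSet_Ioi, restrict_Ioi_eq_restrict_Ici,
      ← withDensity_indicator measurableSet_Ici,
      conv_withDensity_eq_lconvolution (by measurability) (by measurability),
      lconvolution_exp_neg_erlangDensity, withDensity_indicator measurableSet_Ici]

end Laws

section ScaledOrderStatistic

lemma betaDensity_eq_choose (r k : ℕ) (t : ℝ) :
    betaDensity r k t = (r + k + 1) * ((r + k).choose r * t ^ r * (1 - t) ^ k) := by
  have hchoose : ((r + k).choose r : ℝ) * r.factorial * k.factorial = (r + k).factorial := by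
    exact_mod_cast Nat.choose_symm_add ▸ Nat.add_choose_mul_factorial_mul_factorial r k
  rw [betaDensity, Nat.factorial_succ]
  push_cast
  rw [← hchoose]
  field_simp

/-- The density of `m` times the `(r+1)`-st smallest of `m - 1` independent uniform variables, for
the sample size `m = r + k + 2`. -/
def scaledOrderDensity (r k : ℕ) : ℝ → ℝ :=
  (Ioo 0 (r + k + 2 : ℝ)).indicator fun t => betaDensity r k (t / (r + k + 2)) / (r + k + 2)

@[fun_prop]
lemma measurable_scaledOrderDensity (r k : ℕ) : Measurable (scaledOrderDensity r k) :=
  Measurable.indicator (by fun_prop) measurableSet_Ioo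

lemma scaledOrderDensity_nonneg (r k : ℕ) (t : ℝ) : 0 ≤ scaledOrderDensity r k t := by
  refine indicator_nonneg (fun t ht => div_nonneg (betaDensity_nonneg r k ?_) (by positivity)) t
  exact ⟨div_nonneg ht.1.le (by positivity), div_le_one_of_le₀ ht.2.le (by positivity)⟩

lemma tendsto_scaledOrderDensity (r : ℕ) {t : ℝ} (ht : 0 < t) :
    Tendsto (fun k => scaledOrderDensity r k t) atTop (𝓝 (erlangDensity r t)) := by
  have hratio (c : ℝ) : Tendsto (fun n : ℕ => (n + c) / (n + 2)) atTop (𝓝 1) := by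
    have hzero : Tendsto (fun n : ℕ => c / (n + 2 : ℝ)) atTop (𝓝 0) :=
      (tendsto_atTop_add_const_right _ 2 tendsto_natCast_atTop_atTop).const_div_atTop c
    simpa only [add_div, add_zero] using (tendsto_natCast_div_add_atTop (2 : ℝ)).add hzero
  have hpoisson := tendsto_choose_mul_pow_of_tendsto_mul_atTop r (p := fun n => t / (n + 2))
    (r := t) (by simpa [mul_div_left_comm] using (hratio 0).const_mul t)
  have hlimit : Tendsto (fun n : ℕ => (n + 1) / (n + 2) *
      (n.choose r * (t / (n + 2)) ^ r * (1 - t / (n + 2)) ^ (n - r))) atTop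
      (𝓝 (erlangDensity r t)) := by
    simpa only [erlangDensity, one_mul, mul_comm (t ^ r)] using (hratio 1).mul hpoisson
  refine (hlimit.comp (tendsto_add_atTop_nat r)).congr' ?_
  filter_upwards [(tendsto_natCast_atTop_atTop (R := ℝ)).eventually_gt_atTop t] with k hk
  have hmem : t ∈ Ioo (0 : ℝ) (r + k + 2) := ⟨ht, by linarith [Nat.cast_nonneg (α := ℝ) r]⟩
  rw [scaledOrderDensity, indicator_of_mem hmem, betaDensity_eq_choose]
  simp only [Function.comp_apply, add_comm k r, Nat.add_sub_cancel_left, Nat.cast_add]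
  ring

/-- An integrable majorant of `scaledOrderDensity r k` for all large `k`. -/
def erlangMajorant (r : ℕ) (t : ℝ) : ℝ := t ^ r * rexp (-t / 2) / r.factorial

lemma erlangDensity_le_erlangMajorant (r : ℕ) {t : ℝ} (ht : 0 ≤ t) :
    erlangDensity r t ≤ erlangMajorant r t := by
  unfold erlangDensity erlangMajorant
  gcongr
  linarith

lemma one_sub_div_pow_le_exp_neg_half {k : ℕ} {m t : ℝ} (ht : 0 ≤ t) (htm : t < m)
    (hm : m ≤ 2 * k) : (1 - t / m) ^ k ≤ rexp (-t / 2) := by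
  have hm0 : 0 < m := ht.trans_lt htm
  have hhalf : 1 / 2 ≤ k / m := by
    rw [div_le_div_iff₀ two_pos hm0]
    linarith
  calc (1 - t / m) ^ k ≤ rexp (-(t / m)) ^ k :=
        pow_le_pow_left₀ (sub_nonneg.2 (div_le_one_of_le₀ htm.le hm0.le))
          (Real.one_sub_le_exp_neg _) k
    _ = rexp (-(t * (k / m))) := by rw [← Real.exp_nat_mul]; ring_nf
    _ ≤ rexp (-t / 2) := Real.exp_le_exp.2 (by linarith [mul_le_mul_of_nonneg_left hhalf ht])

lemma choose_mul_div_pow_le {n r : ℕ} {m t : ℝ} (ht : 0 ≤ t) (hm : 0 < m) (hn : n ≤ m) :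
    n.choose r * (t / m) ^ r ≤ t ^ r / r.factorial := by
  calc n.choose r * (t / m) ^ r ≤ m ^ r / r.factorial * (t / m) ^ r := by
        gcongr
        exact (Nat.choose_le_pow_div r n).trans (by gcongr)
    _ = t ^ r / r.factorial := by
        rw [div_pow]
        field_simp

lemma scaledOrderDensity_le_erlangMajorant {r k : ℕ} (hk : r + 2 ≤ k) {t : ℝ} (ht : 0 ≤ t) :
    scaledOrderDensity r k t ≤ erlangMajorant r t := by
  refine indicator_apply_le' (fun htm => ?_) fun _ => by unfold erlangMajorant; positivity
  have hm : (0 : ℝ) < r + k + 2 := by positivity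
  have hk' : (r + 2 : ℝ) ≤ k := by exact_mod_cast hk
  rw [betaDensity_eq_choose]
  calc (r + k + 1) * ((r + k).choose r * (t / (r + k + 2)) ^ r * (1 - t / (r + k + 2)) ^ k) /
        (r + k + 2)
      = (r + k + 1) / (r + k + 2) *
          ((r + k).choose r * (t / (r + k + 2)) ^ r * (1 - t / (r + k + 2)) ^ k) := by ring
    _ ≤ 1 * (t ^ r / r.factorial * rexp (-t / 2)) := by
        have hbase : 0 ≤ 1 - t / (r + k + 2) := sub_nonneg.2 (div_le_one_of_le₀ htm.2.le hm.le)
        refine mul_le_mul (div_le_one_of_le₀ (by linarith) hm.le) ?_ (by positivity) one_pos.le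
        exact mul_le_mul (choose_mul_div_pow_le ht hm (by push_cast; linarith))
          (one_sub_div_pow_le_exp_neg_half ht htm.2 (by linarith)) (by positivity) (by positivity)
    _ = erlangMajorant r t := by unfold erlangMajorant; ring

lemma integrableOn_erlangMajorant (r : ℕ) : IntegrableOn (erlangMajorant r) (Ioi 0) := by
  have := integrableOn_rpow_mul_exp_neg_mul_rpow (p := 1) (s := r) (b := 1 / 2)
    (by linarith [Nat.cast_nonneg (α := ℝ) r]) one_pos one_half_pos
  refine IntegrableOn.congr_fun (this.div_const (r.factorial : ℝ)) (fun t _ => ?_)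
    measurableSet_Ioi
  simp only [erlangMajorant, Real.rpow_natCast, Real.rpow_one]
  ring_nf

lemma integrableOn_mul_erlangMajorant (r : ℕ) :
    IntegrableOn (fun t => t * erlangMajorant r t) (Ioi 0) := by
  refine IntegrableOn.congr_fun ((integrableOn_erlangMajorant (r + 1)).const_mul (r + 1 : ℝ))
    (fun t _ => ?_) measurableSet_Ioi
  simp only [erlangMajorant, Nat.factorial_succ]
  push_cast
  field_simp
  ring

lemma lintegral_betaDensity (r k : ℕ) :
    ∫⁻ t, ENNReal.ofReal (betaDensity r k t) ∂unif01 = 1 := by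
  have hone : IsLowerStatistic r fun _ _ => 1 :=
    ⟨fun _ => measurable_const, fun _ _ _ => rfl, fun _ _ _ _ => rfl⟩
  simpa [unifPi] using (hone.lintegral_unifPi k).symm

lemma lintegral_betaDensity_mul_comp (r k : ℕ) (Φ : ℝ → ℝ≥0∞) :
    ∫⁻ t, ENNReal.ofReal (betaDensity r k t) * Φ ((r + k + 2) * t) ∂unif01 =
      ∫⁻ s in Ioi 0, ENNReal.ofReal (scaledOrderDensity r k s) * Φ s := by
  have hm : (0 : ℝ) < r + k + 2 := by positivity
  have hpre : ((r + k + 2 : ℝ) * ·) ⁻¹' Ioo 0 (r + k + 2) = Ioo 0 1 := by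
    rw [preimage_const_mul_Ioo₀ _ _ hm, zero_div, div_self hm.ne']
  have hindicator : (Ioi 0).indicator
      (fun s => ENNReal.ofReal (scaledOrderDensity r k s) * Φ s) =
        (Ioo (0 : ℝ) (r + k + 2)).indicator fun s =>
          ENNReal.ofReal (betaDensity r k (s / (r + k + 2)) / (r + k + 2)) * Φ s := by
    funext s
    by_cases hs : s ∈ Ioo (0 : ℝ) (r + k + 2)
    · rw [indicator_of_mem hs, indicator_of_mem (show s ∈ Ioi 0 from hs.1), scaledOrderDensity,
        indicator_of_mem hs]
    · simp [scaledOrderDensity, indicator_of_notMem hs]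
  rw [← lintegral_indicator measurableSet_Ioi, hindicator, lintegral_indicator measurableSet_Ioo,
    ← ofReal_mul_setLIntegral_comp_const_mul hm, hpre, ← lintegral_const_mul' _ _
      ENNReal.ofReal_ne_top, unif01]
  refine lintegral_congr fun t => ?_
  rw [mul_div_cancel_left₀ _ hm.ne', ← mul_assoc, ← ENNReal.ofReal_mul hm.le,
    mul_div_cancel₀ _ hm.ne']

lemma lintegral_scaledOrderDensity (r k : ℕ) :
    ∫⁻ s in Ioi 0, ENNReal.ofReal (scaledOrderDensity r k s) = 1 := by
  simpa only [mul_one, lintegral_betaDensity] using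
    (lintegral_betaDensity_mul_comp r k fun _ => 1).symm

end ScaledOrderStatistic

section ScaleMixtures

lemma sq_lintegral_mul_le {α : Type*} [MeasurableSpace α] (μ : Measure α) {f g : α → ℝ≥0∞}
    (hf : Measurable f) (hg : Measurable g) :
    (∫⁻ a, f a * g a ∂μ) ^ 2 ≤ (∫⁻ a, f a ∂μ) * ∫⁻ a, f a * g a ^ 2 ∂μ := by
  have hCS := ENNReal.lintegral_mul_le_Lp_mul_Lq (μ.withDensity f) Real.HolderConjugate.two_two
    (f := 1) (g := g) aemeasurable_const hg.aemeasurable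
  have hsq : ∀ a : ℝ≥0∞, (a ^ (1 / 2 : ℝ)) ^ 2 = a := fun a => by
    rw [← ENNReal.rpow_two, ← ENNReal.rpow_mul, one_div_mul_cancel two_ne_zero, ENNReal.rpow_one]
  have hCS2 := pow_le_pow_left' hCS 2
  rw [mul_pow, hsq, hsq] at hCS2
  simpa only [Pi.one_apply, one_mul, one_pow, ENNReal.one_rpow, ENNReal.rpow_two, Pi.mul_apply,
    lintegral_withDensity_eq_lintegral_mul μ hf hg, mul_one,
    lintegral_withDensity_eq_lintegral_mul μ hf measurable_const,
    lintegral_withDensity_eq_lintegral_mul μ hf (hg.pow_const 2)] using hCS2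

lemma memLp_two_iff_lintegral_enorm_sq_lt_top {α : Type*} [MeasurableSpace α] {μ : Measure α}
    {f : α → ℝ} (hf : AEStronglyMeasurable f μ) : MemLp f 2 μ ↔ ∫⁻ a, ‖f a‖ₑ ^ 2 ∂μ < ∞ := by
  rw [MemLp, and_iff_right hf,
    eLpNorm_lt_top_iff_lintegral_rpow_enorm_lt_top two_ne_zero ENNReal.ofNat_ne_top]
  simp only [ENNReal.toReal_ofNat, ENNReal.rpow_two]

lemma setLIntegral_Ioi_comp_div {t : ℝ} (ht : 0 < t) (F : ℝ → ℝ≥0∞) :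
    ∫⁻ x in Ioi 0, F (x / t) = ENNReal.ofReal t * ∫⁻ y in Ioi 0, F y := by
  have hpre : (t * ·) ⁻¹' Ioi 0 = Ioi (0 : ℝ) := by
    rw [preimage_const_mul_Ioi₀ _ ht, zero_div]
  rw [← ofReal_mul_setLIntegral_comp_const_mul ht, hpre]
  simp only [mul_div_cancel_left₀ _ ht.ne']

lemma lintegral_sq_lintegral_mul_comp_div_le {b G : ℝ → ℝ≥0∞} (hb : Measurable b)
    (hG : Measurable G) :
    ∫⁻ x in Ioi 0, (∫⁻ t in Ioi 0, b t * G (x / t)) ^ 2 ≤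
      (∫⁻ t in Ioi 0, b t) * ((∫⁻ t in Ioi 0, b t * ENNReal.ofReal t) *
        ∫⁻ y in Ioi 0, G y ^ 2) := by
  calc ∫⁻ x in Ioi 0, (∫⁻ t in Ioi 0, b t * G (x / t)) ^ 2
      ≤ ∫⁻ x in Ioi 0, (∫⁻ t in Ioi 0, b t) * ∫⁻ t in Ioi 0, b t * G (x / t) ^ 2 :=
        lintegral_mono fun x => sq_lintegral_mul_le _ hb (by fun_prop)
    _ = (∫⁻ t in Ioi 0, b t) * ∫⁻ t in Ioi 0, ∫⁻ x in Ioi 0, b t * G (x / t) ^ 2 := by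
        rw [lintegral_const_mul _ (by fun_prop),
          lintegral_lintegral_swap (f := fun x t => b t * G (x / t) ^ 2)
            (by fun_prop)]
    _ = _ := by
        congr 1
        rw [← lintegral_mul_const _ (by fun_prop)]
        refine setLIntegral_congr_fun measurableSet_Ioi fun t ht => ?_
        rw [lintegral_const_mul _ (by fun_prop), setLIntegral_Ioi_comp_div ht fun y => G y ^ 2,
          mul_assoc]

lemma sq_lintegral_lintegral_le {α β : Type*} [MeasurableSpace α] [MeasurableSpace β]
    (μ : Measure α) (ν : Measure β) [IsProbabilityMeasure ν] {F : α × β → ℝ≥0∞}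
    (hF : Measurable F) :
    ∫⁻ a, (∫⁻ b, F (a, b) ∂ν) ^ 2 ∂μ ≤ ∫⁻ p, F p ^ 2 ∂μ.prod ν := by
  rw [lintegral_prod _ (by fun_prop)]
  refine lintegral_mono fun a => ?_
  simpa only [one_mul, lintegral_one, measure_univ] using
    sq_lintegral_mul_le ν (f := fun _ => 1) (g := fun b => F (a, b)) measurable_const (by fun_prop)

lemma memLp_two_integral_prod_right {α β : Type*} [MeasurableSpace α] [MeasurableSpace β]
    {μ : Measure α} {ν : Measure β} [IsProbabilityMeasure ν] {J : α × β → ℝ} (hJ : Measurable J)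
    (hJ2 : MemLp J 2 (μ.prod ν)) : MemLp (fun a => ∫ b, J (a, b) ∂ν) 2 μ := by
  refine (memLp_two_iff_lintegral_enorm_sq_lt_top
    hJ.stronglyMeasurable.integral_prod_right'.aestronglyMeasurable).2 ?_
  calc ∫⁻ a, ‖∫ b, J (a, b) ∂ν‖ₑ ^ 2 ∂μ
      ≤ ∫⁻ a, (∫⁻ b, ‖J (a, b)‖ₑ ∂ν) ^ 2 ∂μ :=
        lintegral_mono fun a => pow_le_pow_left' (enorm_integral_le_lintegral_enorm _) 2
    _ ≤ ∫⁻ p, ‖J p‖ₑ ^ 2 ∂μ.prod ν := sq_lintegral_lintegral_le μ ν hJ.enorm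
    _ < ∞ := (memLp_two_iff_lintegral_enorm_sq_lt_top hJ2.1).1 hJ2

/-- A weight on `(0,∞)`, integrable together with its first moment. -/
structure IsMixingWeight (b : ℝ → ℝ) : Prop where
  measurable : Measurable b
  integrableOn : IntegrableOn b (Ioi 0)
  integrableOn_id_mul : IntegrableOn (fun t => t * b t) (Ioi 0)

/-- The multiplicative convolution of `g` with the weight `b`: if `b` is the density of a positive
random variable `T`, this is the expectation of `g (x / T)`. -/
def scaleMixture (b g : ℝ → ℝ) (x : ℝ) : ℝ := ∫ t in Ioi 0, b t * g (x / t)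

lemma stronglyMeasurable_scaleMixture {b g : ℝ → ℝ} (hb : Measurable b) (hg : Measurable g) :
    StronglyMeasurable (scaleMixture b g) :=
  StronglyMeasurable.integral_prod_right (f := fun x t => b t * g (x / t))
    (by fun_prop : Measurable fun p : ℝ × ℝ => b p.2 * g (p.1 / p.2)).stronglyMeasurable

namespace IsMixingWeight

variable {b d : ℝ → ℝ}

lemma mono (hb : IsMixingWeight b) (hd : Measurable d) (hdb : ∀ t > 0, ‖d t‖ ≤ b t) :
    IsMixingWeight d where
  measurable := hd
  integrableOn := hb.integrableOn.mono' hd.aestronglyMeasurable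
    ((ae_restrict_mem measurableSet_Ioi).mono hdb)
  integrableOn_id_mul := hb.integrableOn_id_mul.mono' (by fun_prop) <|
    (ae_restrict_mem measurableSet_Ioi).mono fun t ht => by
      rw [norm_mul, Real.norm_of_nonneg (le_of_lt ht)]
      exact mul_le_mul_of_nonneg_left (hdb t ht) (le_of_lt ht)

lemma lintegral_sq_lt_top (hb : IsMixingWeight b) {G : ℝ → ℝ≥0∞} (hG : Measurable G)
    (hG2 : ∫⁻ y in Ioi 0, G y ^ 2 < ∞) :
    ∫⁻ x in Ioi 0, (∫⁻ t in Ioi 0, ‖b t‖ₑ * G (x / t)) ^ 2 < ∞ := by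
  refine (lintegral_sq_lintegral_mul_comp_div_le hb.measurable.enorm hG).trans_lt ?_
  have hmoment : ∫⁻ t in Ioi 0, ‖b t‖ₑ * ENNReal.ofReal t = ∫⁻ t in Ioi 0, ‖t * b t‖ₑ :=
    setLIntegral_congr_fun measurableSet_Ioi fun t ht => by
      rw [enorm_mul, Real.enorm_of_nonneg (le_of_lt ht), mul_comm]
  rw [hmoment]
  exact ENNReal.mul_lt_top hb.integrableOn.2 (ENNReal.mul_lt_top hb.integrableOn_id_mul.2 hG2)

lemma ae_lintegral_lt_top (hb : IsMixingWeight b) {G : ℝ → ℝ≥0∞} (hG : Measurable G)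
    (hG2 : ∫⁻ y in Ioi 0, G y ^ 2 < ∞) :
    ∀ᵐ x ∂volume.restrict (Ioi 0), ∫⁻ t in Ioi 0, ‖b t‖ₑ * G (x / t) < ∞ := by
  have hbm := hb.measurable
  refine (ae_lt_top (by fun_prop) (hb.lintegral_sq_lt_top hG hG2).ne).mono fun x hx => ?_
  exact (ENNReal.pow_lt_top_iff.1 hx).resolve_right two_ne_zero

variable {g : ℝ → ℝ}

lemma ae_integrableOn_mul_comp_div (hb : IsMixingWeight b) (hg : Measurable g)
    (hg2 : MemLp g 2 (volume.restrict (Ioi 0))) :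
    ∀ᵐ x ∂volume.restrict (Ioi 0), IntegrableOn (fun t => b t * g (x / t)) (Ioi 0) := by
  have hbm := hb.measurable
  refine (hb.ae_lintegral_lt_top hg.enorm
    ((memLp_two_iff_lintegral_enorm_sq_lt_top hg2.1).1 hg2)).mono fun x hx => ?_
  exact ⟨by fun_prop, by simpa only [HasFiniteIntegral, enorm_mul] using hx⟩

lemma memLp_scaleMixture (hb : IsMixingWeight b) (hg : Measurable g)
    (hg2 : MemLp g 2 (volume.restrict (Ioi 0))) :
    MemLp (scaleMixture b g) 2 (volume.restrict (Ioi 0)) := by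
  refine (memLp_two_iff_lintegral_enorm_sq_lt_top
    (stronglyMeasurable_scaleMixture hb.measurable hg).aestronglyMeasurable).2 ?_
  refine lt_of_le_of_lt (lintegral_mono fun x => pow_le_pow_left' ?_ 2)
    (hb.lintegral_sq_lt_top hg.enorm ((memLp_two_iff_lintegral_enorm_sq_lt_top hg2.1).1 hg2))
  simp_rw [← enorm_mul]
  exact enorm_integral_le_lintegral_enorm _

lemma tendsto_integral_sq_scaleMixture {B : ℝ → ℝ} (hB : IsMixingWeight B) {d : ℕ → ℝ → ℝ}
    (hd : ∀ k, Measurable (d k)) (hdB : ∀ᶠ k in atTop, ∀ t > 0, ‖d k t‖ ≤ B t)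
    (hlim : ∀ t > 0, Tendsto (fun k => d k t) atTop (𝓝 (b t))) (hg : Measurable g)
    (hg2 : MemLp g 2 (volume.restrict (Ioi 0))) :
    Tendsto (fun k => ∫ x in Ioi 0, scaleMixture (d k) g x ^ 2) atTop
      (𝓝 (∫ x in Ioi 0, scaleMixture b g x ^ 2)) := by
  have hbound : ∀ᶠ k in atTop, ∀ x, IntegrableOn (fun t => B t * |g (x / t)|) (Ioi 0) →
      |scaleMixture (d k) g x| ≤ scaleMixture B (fun y => |g y|) x := by
    filter_upwards [hdB] with k hk x hx
    refine norm_integral_le_of_norm_le (f := fun t => d k t * g (x / t)) hx <|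
      (ae_restrict_mem measurableSet_Ioi).mono fun t ht => ?_
    rw [norm_mul]
    exact mul_le_mul_of_nonneg_right (hk t ht) (abs_nonneg _)
  have hint := hB.ae_integrableOn_mul_comp_div hg.abs hg2.abs
  refine tendsto_integral_filter_of_dominated_convergence
    (fun x => scaleMixture B (fun y => |g y|) x ^ 2)
    (.of_forall fun k => ((stronglyMeasurable_scaleMixture (hd k) hg).measurable.pow_const
      2).aestronglyMeasurable) ?_ (hB.memLp_scaleMixture hg.abs hg2.abs).integrable_sq ?_
  · filter_upwards [hbound] with k hk
    filter_upwards [hint] with x hx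
    rw [norm_pow]
    exact pow_le_pow_left₀ (norm_nonneg _) (hk x hx) 2
  · filter_upwards [hint] with x hx
    refine Tendsto.pow (tendsto_integral_filter_of_dominated_convergence _
      (.of_forall fun k => by have := hd k; fun_prop) ?_ hx ?_) 2
    · filter_upwards [hdB] with k hk
      filter_upwards [ae_restrict_mem measurableSet_Ioi] with t ht
      rw [norm_mul]
      exact mul_le_mul_of_nonneg_right (hk t ht) (abs_nonneg _)
    · filter_upwards [ae_restrict_mem measurableSet_Ioi] with t ht
      exact (hlim t ht).mul_const _

lemma ae_integrable_comp_div_prod {V : Type*} [MeasurableSpace V] {ν : Measure V}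
    [IsProbabilityMeasure ν] {J : ℝ × V → ℝ} (hb : IsMixingWeight b) (hb0 : ∀ t > 0, 0 ≤ b t)
    (hJ : Measurable J) (hJ2 : MemLp J 2 ((volume.restrict (Ioi 0)).prod ν)) :
    ∀ᵐ x ∂volume.restrict (Ioi 0),
      Integrable (fun p : ℝ × V => J (x / p.1, p.2))
        (((volume.restrict (Ioi 0)).withDensity fun t => ENNReal.ofReal (b t)).prod ν) := by
  have hbm := hb.measurable
  have hG2 := (sq_lintegral_lintegral_le (volume.restrict (Ioi 0)) ν hJ.enorm).trans_lt
    ((memLp_two_iff_lintegral_enorm_sq_lt_top hJ2.1).1 hJ2)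
  filter_upwards [hb.ae_lintegral_lt_top hJ.enorm.lintegral_prod_right' hG2] with x hx
  have hJx : Measurable fun p : ℝ × V => J (x / p.1, p.2) := by fun_prop
  refine ⟨hJx.aestronglyMeasurable, ?_⟩
  rw [HasFiniteIntegral, lintegral_prod _ hJx.enorm.aemeasurable,
    lintegral_withDensity_eq_lintegral_mul _ (by fun_prop) hJx.enorm.lintegral_prod_right']
  refine lt_of_eq_of_lt (setLIntegral_congr_fun measurableSet_Ioi fun t ht => ?_) hx
  rw [Pi.mul_apply, Real.enorm_of_nonneg (hb0 t ht)]

lemma ae_integral_comp_div_prod {V : Type*} [MeasurableSpace V] {ν : Measure V}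
    [IsProbabilityMeasure ν] {J : ℝ × V → ℝ} (hb : IsMixingWeight b) (hb0 : ∀ t > 0, 0 ≤ b t)
    (hJ : Measurable J) (hJ2 : MemLp J 2 ((volume.restrict (Ioi 0)).prod ν)) :
    ∀ᵐ x ∂volume.restrict (Ioi 0),
      ∫ p : ℝ × V, J (x / p.1, p.2)
          ∂((volume.restrict (Ioi 0)).withDensity fun t => ENNReal.ofReal (b t)).prod ν =
        scaleMixture b (fun y => ∫ v, J (y, v) ∂ν) x := by
  have hbm := hb.measurable
  filter_upwards [hb.ae_integrable_comp_div_prod hb0 hJ hJ2] with x hx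
  rw [integral_prod _ hx, integral_withDensity_eq_integral_toReal_smul (by fun_prop)
    (ae_of_all _ fun _ => ENNReal.ofReal_lt_top)]
  refine setIntegral_congr_fun measurableSet_Ioi fun t ht => ?_
  rw [ENNReal.toReal_ofReal (hb0 t ht), smul_eq_mul]

end IsMixingWeight

end ScaleMixtures

section KernelLaws

variable (γ : ℝ) {r : ℕ} {K : (Fin (r + 1) → ℝ) → ℝ}

lemma measurable_unifKernel_cons {α : Type*} [MeasurableSpace α] (hK : Measurable K) {n : ℕ}
    {f : α → ℝ} {g : α → Fin n → ℝ} (hf : Measurable f) (hg : Measurable g) :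
    Measurable fun a => unifKernel γ K (n + 1) (Fin.cons (f a) (g a)) :=
  (measurable_unifKernel γ hK (n + 1)).comp (measurable_finCons hf hg)

/-- The kernel at the reference vector, as a function of the uniform coordinates `v` of
`Z_1,…,Z_{q-1}`; the extra entry `Z_{0:q-1} = 0` has coordinate `1`. -/
def refKernel (K : (Fin (r + 1) → ℝ) → ℝ) (v : Fin r → ℝ) : ℝ :=
  unifKernel γ K (r + 1) (Fin.cons 1 v)

/-- The kernel `K_{q+1}` at the reference vector with one further point inserted, as a function of
the uniform coordinates `p.1` of that point and `p.2` of `Z_1,…,Z_{q-1}`. -/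
def insertedKernel (K : (Fin (r + 1) → ℝ) → ℝ) (p : ℝ × (Fin r → ℝ)) : ℝ :=
  unifKernel γ K (r + 2) (Fin.cons p.1 (Fin.cons 1 p.2))

lemma measurable_refKernel (hK : Measurable K) : Measurable (refKernel γ K) :=
  measurable_unifKernel_cons γ hK measurable_const measurable_id

lemma measurable_insertedKernel (hK : Measurable K) : Measurable (insertedKernel γ K) :=
  measurable_unifKernel_cons γ hK measurable_fst
    (measurable_finCons measurable_const measurable_snd)

lemma isLowerStatistic_unifKernel (hK : Measurable K) {N : ℝ → ℝ≥0∞} (hN : Measurable N) :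
    IsLowerStatistic r fun n u => N (unifKernel γ K n u) where
  measurable n := hN.comp (measurable_unifKernel γ hK n)
  comp_perm hn u σ := congrArg N (unifKernel_comp_perm γ K hn u σ)
  cons_max hn _ _ hu := congrArg N (unifKernel_cons_of_forall_le γ K hn hu)

lemma isLowerStatistic_unifKernel_cons (hK : Measurable K) {N : ℝ → ℝ≥0∞} (hN : Measurable N)
    (x : ℝ) : IsLowerStatistic r fun n u => N (unifKernel γ K (n + 1) (Fin.cons x u)) where
  measurable _ := hN.comp (measurable_unifKernel_cons γ hK measurable_const measurable_id)
  comp_perm hn u σ := congrArg N (unifKernel_cons_comp_perm γ K (hn.trans (Nat.le_succ _)) x u σ)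
  cons_max hn _ _ hu := congrArg N (unifKernel_cons_cons_of_forall_le γ K hn x hu)

lemma finCons_const_mul {n : ℕ} (c a : ℝ) (v : Fin n → ℝ) :
    (Fin.cons (c * a) fun i => c * v i : Fin (n + 1) → ℝ) =
      fun i => c * (Fin.cons a v : Fin (n + 1) → ℝ) i :=
  funext fun i => Fin.cases rfl (fun _ => rfl) i

lemma unifKernel_cons_const_mul_eq_refKernel (hLS : LocScaleInvariant K) {t : ℝ} (ht : 0 < t)
    {v : Fin r → ℝ} (hv : ∀ i, 0 < v i) :
    unifKernel γ K (r + 1) (Fin.cons t fun i => t * v i) = refKernel γ K v := by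
  have hpos : ∀ i, 0 < (Fin.cons 1 v : Fin (r + 1) → ℝ) i := Fin.forall_fin_succ.2 ⟨one_pos, hv⟩
  rw [refKernel, ← unifKernel_const_mul γ hLS le_rfl ht hpos, ← finCons_const_mul, mul_one]

lemma unifKernel_cons_cons_const_mul_eq_insertedKernel (hLS : LocScaleInvariant K) {y t : ℝ}
    (hy : 0 < y) (ht : 0 < t) {v : Fin r → ℝ} (hv : ∀ i, 0 < v i) :
    unifKernel γ K (r + 2) (Fin.cons y (Fin.cons t fun i => t * v i)) =
      insertedKernel γ K (y / t, v) := by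
  have hpos : ∀ i, 0 < (Fin.cons (y / t) (Fin.cons 1 v : Fin (r + 1) → ℝ) : Fin (r + 2) → ℝ) i :=
    Fin.forall_fin_succ.2 ⟨div_pos hy ht, Fin.forall_fin_succ.2 ⟨one_pos, hv⟩⟩
  rw [insertedKernel, ← unifKernel_const_mul γ hLS (Nat.le_succ _) ht hpos, ← finCons_const_mul,
    ← finCons_const_mul, mul_one, mul_div_cancel₀ _ ht.ne']

lemma identDistrib_unifKernel (hK : Measurable K) (hLS : LocScaleInvariant K) (k : ℕ) :
    IdentDistrib (unifKernel γ K (r + 1 + k)) (refKernel γ K) (unifPi (r + 1 + k))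
      (unifPi r) := by
  have hmeas := measurable_unifKernel γ hK (r + 1 + k)
  have hmeas' := measurable_refKernel γ hK
  refine ⟨hmeas.aemeasurable, hmeas'.aemeasurable, Measure.ext_of_lintegral _ fun N hN => ?_⟩
  rw [lintegral_map hN hmeas, lintegral_map hN hmeas',
    (isLowerStatistic_unifKernel γ hK hN).lintegral_unifPi k]
  calc _ = ∫⁻ t, ENNReal.ofReal (betaDensity r k t) *
        ∫⁻ v, N (refKernel γ K v) ∂unifPi r ∂unif01 := by
        refine lintegral_congr_ae (ae_mem_Ioo_unif01.mono fun t ht => congrArg _ ?_)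
        exact lintegral_congr_ae ((ae_mem_Ioo_unifPi r).mono fun v hv => congrArg N <|
          unifKernel_cons_const_mul_eq_refKernel γ hLS ht.1 fun i => (hv i).1)
    _ = _ := by
        rw [lintegral_mul_const _ (measurable_betaDensity r k).ennreal_ofReal,
          lintegral_betaDensity, one_mul]

lemma identDistrib_unifKernel_cons (hK : Measurable K) (hLS : LocScaleInvariant K) (k : ℕ) {x : ℝ}
    (hx : 0 < x) :
    IdentDistrib (fun w => unifKernel γ K (r + 1 + k + 1) (Fin.cons (x / (r + k + 2)) w))
      (fun p => insertedKernel γ K (x / p.1, p.2)) (unifPi (r + 1 + k))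
      (((volume.restrict (Ioi 0)).withDensity fun t =>
        ENNReal.ofReal (scaledOrderDensity r k t)).prod (unifPi r)) := by
  have hm : (0 : ℝ) < r + k + 2 := by positivity
  have hmeas := measurable_unifKernel_cons γ hK (n := r + 1 + k)
    (measurable_const (a := x / (r + k + 2))) measurable_id'
  have hmeas' : Measurable fun p : ℝ × (Fin r → ℝ) => insertedKernel γ K (x / p.1, p.2) :=
    (measurable_insertedKernel γ hK).comp (by fun_prop)
  refine ⟨hmeas.aemeasurable, hmeas'.aemeasurable, Measure.ext_of_lintegral _ fun N hN => ?_⟩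
  have hcomp : Measurable fun p : ℝ × (Fin r → ℝ) => N (insertedKernel γ K (x / p.1, p.2)) :=
    hN.comp hmeas'
  rw [lintegral_map hN hmeas, lintegral_map hN hmeas', lintegral_prod _ hcomp.aemeasurable,
    lintegral_withDensity_eq_lintegral_mul _
      (measurable_scaledOrderDensity r k).ennreal_ofReal hcomp.lintegral_prod_right',
    (isLowerStatistic_unifKernel_cons γ hK hN _).lintegral_unifPi k]
  simp only [Pi.mul_apply]
  rw [← lintegral_betaDensity_mul_comp r k fun t =>
    ∫⁻ v, N (insertedKernel γ K (x / t, v)) ∂unifPi r]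
  refine lintegral_congr_ae (ae_mem_Ioo_unif01.mono fun t ht => congrArg _ ?_)
  refine lintegral_congr_ae ((ae_mem_Ioo_unifPi r).mono fun v hv => congrArg N ?_)
  rw [unifKernel_cons_cons_const_mul_eq_insertedKernel γ hLS (div_pos hx hm) ht.1
    fun i => (hv i).1, div_div]

lemma identDistrib_kernel_refVec (hK : Measurable K) :
    IdentDistrib (fun z => K (refVec z)) (refKernel γ K) (gpPi γ r) (unifPi r) := by
  have hmeas : Measurable fun z : Fin r → ℝ => K (refVec (q := r + 1) z) :=
    hK.comp (measurable_pi_lambda _ fun j => measurable_descStat j)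
  refine ⟨hmeas.aemeasurable, (measurable_refKernel γ hK).aemeasurable, ?_⟩
  rw [← (measurePreserving_hGamma_inv_pi γ r).map_eq]
  exact (Measure.map_map hmeas (measurable_hGamma_inv_pi γ r)).trans <| Measure.map_congr <|
    (ae_mem_Ioo_unifPi r).mono fun v hv => kernel_refVec_eq_unifKernel γ K hv

lemma identDistrib_Km_snoc_refVec (hK : Measurable K) (x : ℝ) :
    IdentDistrib
      (fun zs : (Fin r → ℝ) × ℝ =>
        Km K (r + 2) (Fin.snoc (refVec (q := r + 1) zs.1) (hGamma γ (zs.2 / x))))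
      (fun p => insertedKernel γ K (x / p.1, p.2)) ((gpPi γ r).prod (erlangMeasure (r + 1)))
      (((volume.restrict (Ioi 0)).withDensity fun t =>
        ENNReal.ofReal (erlangDensity r t)).prod (unifPi r)) := by
  rw [← erlangMeasure_eq_withDensity]
  have hlaw := ((measurePreserving_hGamma_inv_pi γ r).prod
    (MeasurePreserving.id (erlangMeasure (r + 1)))).comp Measure.measurePreserving_swap
  have hmeas : Measurable fun zs : (Fin r → ℝ) × ℝ =>
      Km K (r + 2) (Fin.snoc (refVec (q := r + 1) zs.1) (hGamma γ (zs.2 / x))) :=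
    (measurable_Km hK _).comp <| measurable_finSnoc
      (measurable_pi_lambda _ fun j => (measurable_descStat j).comp measurable_fst)
      ((measurable_hGamma γ).comp (by fun_prop))
  have hmeas' : Measurable fun p : ℝ × (Fin r → ℝ) => insertedKernel γ K (x / p.1, p.2) :=
    (measurable_insertedKernel γ hK).comp (by fun_prop)
  refine ⟨hmeas.aemeasurable, hmeas'.aemeasurable, ?_⟩
  rw [← hlaw.map_eq, Measure.map_map hmeas hlaw.measurable]
  refine Measure.map_congr <| (measurePreserving_snd.quasiMeasurePreserving.ae
    (ae_mem_Ioo_unifPi r)).mono fun p hv => ?_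
  have hp := Km_snoc_refVec_eq_unifKernel γ K hv (x / p.1)
  rwa [inv_div] at hp

lemma identDistrib_Km_unifKernel (hK : Measurable K) (n : ℕ) :
    IdentDistrib (Km K n) (unifKernel γ K n) (gpPi γ n) (unifPi n) := by
  refine ⟨(measurable_Km hK n).aemeasurable, (measurable_unifKernel γ hK n).aemeasurable, ?_⟩
  rw [← (measurePreserving_hGamma_inv_pi γ n).map_eq,
    Measure.map_map (measurable_Km hK n) (measurable_hGamma_inv_pi γ n)]
  rfl

end KernelLaws

section InsertionEffect

variable (γ : ℝ) {r : ℕ} {K : (Fin (r + 1) → ℝ) → ℝ}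

/-- The change in the kernel caused by inserting a point with coordinate `p.1` into the reference
vector. -/
def insertionEffect (K : (Fin (r + 1) → ℝ) → ℝ) (p : ℝ × (Fin r → ℝ)) : ℝ :=
  insertedKernel γ K p - refKernel γ K p.2

/-- The expected change in the kernel caused by inserting a point with coordinate `y`. -/
def meanInsertionEffect (K : (Fin (r + 1) → ℝ) → ℝ) (y : ℝ) : ℝ :=
  ∫ v, insertionEffect γ K (y, v) ∂unifPi r

lemma measurable_insertionEffect (hK : Measurable K) : Measurable (insertionEffect γ K) :=
  (measurable_insertedKernel γ hK).sub ((measurable_refKernel γ hK).comp measurable_snd)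

lemma measurable_meanInsertionEffect (hK : Measurable K) : Measurable (meanInsertionEffect γ K) :=
  (measurable_insertionEffect γ hK).stronglyMeasurable.integral_prod_right'.measurable

lemma insertedKernel_of_le_one {y : ℝ} (hy : y ∈ Ioc 0 1) {v : Fin r → ℝ}
    (hv : ∀ i, v i ∈ Ioo 0 1) :
    insertedKernel γ K (y, v) = unifKernel γ K (r + 1) (Fin.cons y v) := by
  rw [insertedKernel, unifKernel_cons_cons_comm γ K (Nat.le_succ _)]
  exact unifKernel_cons_of_forall_le γ K le_rfl
    (Fin.forall_fin_succ.2 ⟨hy, fun i => ⟨(hv i).1, (hv i).2.le⟩⟩)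

lemma insertionEffect_of_one_le {y : ℝ} (hy : 1 ≤ y) {v : Fin r → ℝ} (hv : ∀ i, v i ∈ Ioo 0 1) :
    insertionEffect γ K (y, v) = 0 :=
  sub_eq_zero.2 <| unifKernel_cons_of_forall_le γ K le_rfl
    (Fin.forall_fin_succ.2 ⟨⟨one_pos, hy⟩, fun i => ⟨(hv i).1, (hv i).2.le.trans hy⟩⟩)

lemma meanInsertionEffect_of_one_le {y : ℝ} (hy : 1 ≤ y) : meanInsertionEffect γ K y = 0 :=
  integral_eq_zero_of_ae <| (ae_mem_Ioo_unifPi r).mono fun _ hv =>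
    insertionEffect_of_one_le γ hy hv

lemma memLp_insertionEffect_unif01 (hK : Measurable K) (hLS : LocScaleInvariant K)
    (h2 : MemLp (refKernel γ K) 2 (unifPi r)) :
    MemLp (insertionEffect γ K) 2 (unif01.prod (unifPi r)) := by
  have hcons : MemLp (fun p : ℝ × (Fin r → ℝ) => unifKernel γ K (r + 1) (Fin.cons p.1 p.2)) 2
      (unif01.prod (unifPi r)) :=
    ((identDistrib_unifKernel γ hK hLS 0).symm.memLp_snd h2).comp_measurePreserving
      (measurePreserving_finCons unif01 r)
  have href := h2.comp_measurePreserving (measurePreserving_snd (μ := unif01) (ν := unifPi r))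
  refine (hcons.sub href).ae_eq ?_
  have hmem : ∀ᵐ p ∂unif01.prod (unifPi r), p.1 ∈ Ioo (0 : ℝ) 1 ∧ ∀ i, p.2 i ∈ Ioo (0 : ℝ) 1 :=
    (measurePreserving_fst.quasiMeasurePreserving.ae ae_mem_Ioo_unif01).and
      (measurePreserving_snd.quasiMeasurePreserving.ae (ae_mem_Ioo_unifPi r))
  filter_upwards [hmem] with ⟨y, v⟩ ⟨hy, hv⟩
  rw [insertionEffect, insertedKernel_of_le_one γ ⟨hy.1, hy.2.le⟩ hv]
  rfl

lemma memLp_insertionEffect (hK : Measurable K) (hLS : LocScaleInvariant K)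
    (h2 : MemLp (refKernel γ K) 2 (unifPi r)) :
    MemLp (insertionEffect γ K) 2 ((volume.restrict (Ioi 0)).prod (unifPi r)) := by
  have hmeas := measurable_insertionEffect γ hK
  have hunif := memLp_insertionEffect_unif01 γ hK hLS h2
  rw [memLp_two_iff_lintegral_enorm_sq_lt_top hmeas.aestronglyMeasurable,
    lintegral_prod _ (by fun_prop)] at hunif ⊢
  rw [← Ioo_union_Ici_eq_Ioi one_pos, lintegral_union measurableSet_Ici
    (disjoint_left.2 fun y hy hy' => hy.2.not_ge hy'),
    setLIntegral_eq_zero measurableSet_Ici fun y hy => ?_, add_zero]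
  · exact hunif
  · refine (lintegral_eq_zero_iff (by fun_prop)).2 <| (ae_mem_Ioo_unifPi r).mono fun v hv => ?_
    simp only [insertionEffect_of_one_le γ hy hv, enorm_zero, Pi.zero_apply, zero_pow two_ne_zero]

lemma memLp_meanInsertionEffect (hK : Measurable K) (hLS : LocScaleInvariant K)
    (h2 : MemLp (refKernel γ K) 2 (unifPi r)) :
    MemLp (meanInsertionEffect γ K) 2 (volume.restrict (Ioi 0)) :=
  memLp_two_integral_prod_right (measurable_insertionEffect γ hK)
    (memLp_insertionEffect γ hK hLS h2)

lemma thetaK_eq_integral_refKernel (hK : Measurable K) :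
    thetaK γ K = ∫ v, refKernel γ K v ∂unifPi r :=
  (identDistrib_kernel_refVec γ hK).integral_eq

lemma ae_integral_insertedKernel (hK : Measurable K) (hLS : LocScaleInvariant K)
    (h2 : MemLp (refKernel γ K) 2 (unifPi r)) {d : ℝ → ℝ} (hd : IsMixingWeight d)
    (hd0 : ∀ t > 0, 0 ≤ d t) (hd1 : ∫⁻ t in Ioi 0, ENNReal.ofReal (d t) = 1) :
    ∀ᵐ x ∂volume.restrict (Ioi 0), ∫ p, insertedKernel γ K (x / p.1, p.2) - thetaK γ K
        ∂((volume.restrict (Ioi 0)).withDensity fun t => ENNReal.ofReal (d t)).prod (unifPi r) =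
      scaleMixture d (meanInsertionEffect γ K) x := by
  have : IsProbabilityMeasure
      ((volume.restrict (Ioi 0)).withDensity fun t => ENNReal.ofReal (d t)) :=
    ⟨by rwa [withDensity_apply _ MeasurableSet.univ, setLIntegral_univ]⟩
  have hJ := measurable_insertionEffect γ hK
  have hJ2 := memLp_insertionEffect γ hK hLS h2
  have href := (h2.integrable one_le_two).comp_snd
    ((volume.restrict (Ioi 0)).withDensity fun t => ENNReal.ofReal (d t))
  filter_upwards [hd.ae_integrable_comp_div_prod hd0 hJ hJ2,
    hd.ae_integral_comp_div_prod hd0 hJ hJ2] with x hint hmean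
  refine Eq.trans ?_ hmean
  have hsplit : (fun p : ℝ × (Fin r → ℝ) => insertedKernel γ K (x / p.1, p.2)) =
      fun p => insertionEffect γ K (x / p.1, p.2) + refKernel γ K p.2 :=
    funext fun p => (sub_add_cancel _ _).symm
  rw [integral_sub ((hint.add href).congr (.of_forall fun p => (congrFun hsplit p).symm))
    (integrable_const _), hsplit, integral_add hint href, integral_fun_snd, integral_const,
    thetaK_eq_integral_refKernel γ hK]
  simp

end InsertionEffect

section SharedCoordinate

lemma integral_comp_measurePreserving {α β : Type*} [MeasurableSpace α] [MeasurableSpace β]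
    {μ : Measure α} {ν : Measure β} {φ : α → β} {g : β → ℝ} (hφ : MeasurePreserving φ μ ν)
    (hg : Measurable g) : ∫ a, g (φ a) ∂μ = ∫ b, g b ∂ν := by
  rw [← hφ.map_eq, integral_map hφ.aemeasurable hg.aestronglyMeasurable]

variable {α β : Type*} [MeasurableSpace α] [MeasurableSpace β] {μ : Measure α} {ν : Measure β}
  [IsProbabilityMeasure μ] [IsProbabilityMeasure ν] {f : α × β → ℝ}

lemma integral_mul_of_shared_fst (hf : MemLp f 2 (μ.prod ν)) :
    ∫ p : α × β × β, f (p.1, p.2.1) * f (p.1, p.2.2) ∂μ.prod (ν.prod ν) =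
      ∫ a, (∫ b, f (a, b) ∂ν) ^ 2 ∂μ := by
  have hleft := hf.comp_measurePreserving
    ((MeasurePreserving.id μ).prod (measurePreserving_fst (μ := ν) (ν := ν)))
  have hright := hf.comp_measurePreserving
    ((MeasurePreserving.id μ).prod (measurePreserving_snd (μ := ν) (ν := ν)))
  refine (integral_prod _ (hleft.integrable_mul hright)).trans
    (integral_congr_ae (.of_forall fun a => ?_))
  exact (integral_prod_mul (fun b => f (a, b)) fun b => f (a, b)).trans (sq _).symm

lemma integral_mul_sub_mul_eq_variance (hf : Measurable f) (hf2 : MemLp f 2 (μ.prod ν)) :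
    ∫ p : α × β × β, f (p.1, p.2.1) * f (p.1, p.2.2) ∂μ.prod (ν.prod ν) -
        (∫ p, f p ∂μ.prod ν) * ∫ p, f p ∂μ.prod ν =
      Var[fun a => ∫ b, f (a, b) ∂ν; μ] := by
  rw [integral_mul_of_shared_fst hf2, integral_prod _ (hf2.integrable one_le_two),
    variance_eq_sub (memLp_two_integral_prod_right hf hf2), ← sq]
  rfl

end SharedCoordinate

section OverlappingBlocks

variable {Ω : Type*} [MeasurableSpace Ω] {P : Measure Ω} {Z : ℕ → Ω → ℝ} {μ : Measure ℝ}
  [IsProbabilityMeasure P]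

lemma map_comp_injective_eq_pi (hZ : ∀ i, Measurable (Z i))
    (hindep : iIndepFun Z P) (hlaw : ∀ i, P.map (Z i) = μ) {ι : Type*} [Fintype ι] {e : ι → ℕ}
    (he : Function.Injective e) :
    P.map (fun ω i => Z (e i) ω) = Measure.pi fun _ => μ := by
  rw [(iIndepFun_iff_map_fun_eq_pi_map fun i => (hZ (e i)).aemeasurable).1 (hindep.precomp he)]
  simp only [hlaw]

lemma measurePreserving_overlappingBlocks [IsProbabilityMeasure μ]
    (hZ : ∀ i, Measurable (Z i))
    (hindep : iIndepFun Z P) (hlaw : ∀ i, P.map (Z i) = μ) (n : ℕ) :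
    MeasurePreserving
      (fun ω => (Z n ω, (fun i : Fin n => Z i ω), fun i : Fin n => Z (n + 1 + i) ω)) P
      (μ.prod ((Measure.pi fun _ => μ).prod (Measure.pi fun _ => μ))) := by
  let e : Unit ⊕ (Fin n ⊕ Fin n) → ℕ :=
    Sum.elim (fun _ => n) (Sum.elim (fun i => i) fun i => n + 1 + i)
  have he : Function.Injective e := by
    rintro (_ | i | i) (_ | j | j) h <;> simp [e, Fin.ext_iff] at h ⊢ <;> omega
  have hpi : MeasurePreserving (fun ω i => Z (e i) ω) P (Measure.pi fun _ => μ) :=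
    ⟨measurable_pi_lambda _ fun i => hZ (e i), map_comp_injective_eq_pi hZ hindep hlaw he⟩
  have hblocks := measurePreserving_sumPiEquivProdPi fun _ : Fin n ⊕ Fin n => μ
  have hsplit := measurePreserving_sumPiEquivProdPi fun _ : Unit ⊕ (Fin n ⊕ Fin n) => μ
  exact (((measurePreserving_funUnique μ Unit).prod hblocks).comp hsplit).comp hpi

variable {q : ℕ} {K : (Fin q → ℝ) → ℝ}

lemma Km_snoc_eq_Km_cons {n : ℕ} (hn : q ≤ n + 1) (x : Fin n → ℝ) (a : ℝ) :
    Km K (n + 1) (Fin.snoc x a) = Km K (n + 1) (Fin.cons a x) :=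
  Km_congr_countGE K hn (funext fun t => by rw [countGE_snoc, countGE_cons])

lemma zetaCov_succ_one_eq_variance [IsProbabilityMeasure μ] (hZ : ∀ i, Measurable (Z i))
    (hindep : iIndepFun Z P) (hlaw : ∀ i, P.map (Z i) = μ) (hK : Measurable K) {n : ℕ}
    (hn : q ≤ n + 1) (h2 : MemLp (Km K (n + 1)) 2 (Measure.pi fun _ => μ)) :
    zetaCov P K Z (n + 1) 1 =
      Var[fun z => ∫ w, Km K (n + 1) (Fin.cons z w) ∂Measure.pi fun _ : Fin n => μ; μ] := by
  let f : ℝ × (Fin n → ℝ) → ℝ := fun p => Km K (n + 1) (Fin.cons p.1 p.2)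
  have hf : Measurable f := (measurable_Km hK _).comp (measurable_finCons measurable_fst
    measurable_snd)
  have hf2 : MemLp f 2 (μ.prod (Measure.pi fun _ => μ)) :=
    h2.comp_measurePreserving (measurePreserving_finCons μ n)
  have hleft : ∀ ω, Km K (n + 1) (fun i : Fin (n + 1) => Z i ω) =
      f (Z n ω, fun i : Fin n => Z i ω) := fun ω => by
    refine (congrArg (Km K (n + 1)) (funext ?_)).trans (Km_snoc_eq_Km_cons hn _ _)
    exact Fin.lastCases (by simp) (by simp)
  have hright : ∀ ω, Km K (n + 1) (fun i : Fin (n + 1) => Z (n + 1 - 1 + i) ω) =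
      f (Z n ω, fun i : Fin n => Z (n + 1 + i) ω) := fun ω => by
    refine congrArg (Km K (n + 1)) (funext ?_)
    exact Fin.cases (by simp) fun i => by simp [Nat.add_right_comm, Nat.add_assoc]
  have hjoint := measurePreserving_overlappingBlocks hZ hindep hlaw n
  have hfirst := ((MeasurePreserving.id μ).prod measurePreserving_fst).comp hjoint
  have hsecond := ((MeasurePreserving.id μ).prod measurePreserving_snd).comp hjoint
  rw [← integral_mul_sub_mul_eq_variance hf hf2]
  simp only [zetaCov, hleft, hright]
  congr 2
  · exact integral_comp_measurePreserving (g := fun p => f (p.1, p.2.1) * f (p.1, p.2.2)) hjoint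
      (by fun_prop)
  · exact integral_comp_measurePreserving hfirst hf
  · exact integral_comp_measurePreserving hsecond hf

end OverlappingBlocks

section MixingWeights

@[fun_prop]
lemma measurable_erlangMajorant (r : ℕ) : Measurable (erlangMajorant r) := by
  unfold erlangMajorant
  fun_prop

lemma isMixingWeight_erlangMajorant (r : ℕ) : IsMixingWeight (erlangMajorant r) :=
  ⟨measurable_erlangMajorant r, integrableOn_erlangMajorant r, integrableOn_mul_erlangMajorant r⟩

lemma norm_scaledOrderDensity_le {r k : ℕ} (hk : r + 2 ≤ k) {t : ℝ} (ht : 0 < t) :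
    ‖scaledOrderDensity r k t‖ ≤ erlangMajorant r t :=
  (Real.norm_of_nonneg (scaledOrderDensity_nonneg r k t)).trans_le
    (scaledOrderDensity_le_erlangMajorant hk ht.le)

lemma isMixingWeight_scaledOrderDensity {r k : ℕ} (hk : r + 2 ≤ k) :
    IsMixingWeight (scaledOrderDensity r k) :=
  (isMixingWeight_erlangMajorant r).mono (measurable_scaledOrderDensity r k) fun _ =>
    norm_scaledOrderDensity_le hk

lemma isMixingWeight_erlangDensity (r : ℕ) : IsMixingWeight (erlangDensity r) :=
  (isMixingWeight_erlangMajorant r).mono (measurable_erlangDensity r) fun _ ht =>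
    (Real.norm_of_nonneg (erlangDensity_nonneg r ht.le)).trans_le
      (erlangDensity_le_erlangMajorant r ht.le)

lemma lintegral_erlangDensity (r : ℕ) :
    ∫⁻ t in Ioi 0, ENNReal.ofReal (erlangDensity r t) = 1 := by
  rw [← setLIntegral_univ, ← withDensity_apply _ MeasurableSet.univ, ← erlangMeasure_eq_withDensity,
    measure_univ]

end MixingWeights

section AsymptoticVariance

variable (γ : ℝ) {r : ℕ} {K : (Fin (r + 1) → ℝ) → ℝ}

lemma sigmaSqK_eq_integral_sq_scaleMixture (hK : Measurable K) (hLS : LocScaleInvariant K)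
    (h2 : MemLp (refKernel γ K) 2 (unifPi r)) :
    sigmaSqK γ K =
      ∫ x in Ioi 0, scaleMixture (erlangDensity r) (meanInsertionEffect γ K) x ^ 2 := by
  refine integral_congr_ae ?_
  filter_upwards [ae_integral_insertedKernel γ hK hLS h2 (isMixingWeight_erlangDensity r)
    (fun t ht => erlangDensity_nonneg r (le_of_lt ht)) (lintegral_erlangDensity r)] with x hx
  rw [← hx]
  exact congrArg (· ^ 2) ((identDistrib_Km_snoc_refVec γ hK x).sub_const _).integral_eq

lemma ae_integral_unifKernel_cons_sub (hK : Measurable K) (hLS : LocScaleInvariant K)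
    (h2 : MemLp (refKernel γ K) 2 (unifPi r)) {k : ℕ} (hk : r + 2 ≤ k) :
    ∀ᵐ x ∂volume.restrict (Ioi 0),
      ∫ w, (unifKernel γ K (r + 1 + k + 1) (Fin.cons (x / (r + k + 2)) w) - thetaK γ K)
          ∂unifPi (r + 1 + k) =
        scaleMixture (scaledOrderDensity r k) (meanInsertionEffect γ K) x := by
  filter_upwards [ae_restrict_mem measurableSet_Ioi,
    ae_integral_insertedKernel γ hK hLS h2 (isMixingWeight_scaledOrderDensity hk)
      (fun t _ => scaledOrderDensity_nonneg r k t) (lintegral_scaledOrderDensity r k)] with x hx h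
  exact (((identDistrib_unifKernel_cons γ hK hLS k hx).sub_const _).integral_eq).trans h

lemma scaleMixture_scaledOrderDensity_of_le {k : ℕ} {x : ℝ} (hx : (r + k + 2 : ℝ) ≤ x) :
    scaleMixture (scaledOrderDensity r k) (meanInsertionEffect γ K) x = 0 :=
  setIntegral_eq_zero_of_forall_eq_zero fun t _ => by
    by_cases ht : t ∈ Ioo 0 (r + k + 2 : ℝ)
    · rw [meanInsertionEffect_of_one_le γ ((one_le_div ht.1).2 (ht.2.le.trans hx)), mul_zero]
    · rw [scaledOrderDensity, indicator_of_notMem ht, zero_mul]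

lemma mul_integral_unif01 {m : ℝ} (hm : 0 < m) (Φ : ℝ → ℝ) :
    m * ∫ u, Φ u ∂unif01 = ∫ x in Ioo 0 m, Φ (x / m) := by
  rw [unif01, ← integral_Ioc_eq_integral_Ioo, ← integral_Ioc_eq_integral_Ioo,
    ← intervalIntegral.integral_of_le zero_le_one, ← intervalIntegral.integral_of_le hm.le,
    intervalIntegral.integral_comp_div _ hm.ne', zero_div, div_self hm.ne', smul_eq_mul]

lemma mul_integral_sq_unifKernel_cons (hK : Measurable K) (hLS : LocScaleInvariant K)
    (h2 : MemLp (refKernel γ K) 2 (unifPi r)) {k : ℕ} (hk : r + 2 ≤ k) :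
    (r + k + 2 : ℝ) * ∫ u, (∫ w, (unifKernel γ K (r + 1 + k + 1) (Fin.cons u w) - thetaK γ K)
        ∂unifPi (r + 1 + k)) ^ 2 ∂unif01 =
      ∫ x in Ioi 0, scaleMixture (scaledOrderDensity r k) (meanInsertionEffect γ K) x ^ 2 := by
  rw [mul_integral_unif01 (by positivity)]
  have hmean := ae_restrict_of_ae_restrict_of_subset
    (Ioo_subset_Ioi_self : Ioo 0 (r + k + 2 : ℝ) ⊆ Ioi 0)
    (ae_integral_unifKernel_cons_sub γ hK hLS h2 hk)
  rw [integral_congr_ae (hmean.mono fun x hx => congrArg (· ^ 2) hx)]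
  symm
  refine setIntegral_eq_of_subset_of_forall_sdiff_eq_zero measurableSet_Ioi
    Ioo_subset_Ioi_self fun x hx => ?_
  have hmx : (r + k + 2 : ℝ) ≤ x := not_lt.1 fun h => hx.2 ⟨hx.1, h⟩
  rw [scaleMixture_scaledOrderDensity_of_le γ hmx, zero_pow two_ne_zero]

lemma integral_Km_cons_hGamma_inv (hK : Measurable K) (n : ℕ) (u : ℝ) :
    ∫ w, Km K (n + 1) (Fin.cons (hGamma γ u⁻¹) w) ∂gpPi γ n =
      ∫ w, unifKernel γ K (n + 1) (Fin.cons u w) ∂unifPi n := by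
  have hmeas : Measurable fun w : Fin n → ℝ => Km K (n + 1) (Fin.cons (hGamma γ u⁻¹) w) :=
    (measurable_Km hK _).comp (measurable_finCons measurable_const measurable_id')
  rw [← integral_comp_measurePreserving (measurePreserving_hGamma_inv_pi γ n) hmeas]
  simp only [unifKernel, hGamma_inv_cons]

lemma memLp_unifKernel (hK : Measurable K) (hLS : LocScaleInvariant K)
    (h2 : MemLp (refKernel γ K) 2 (unifPi r)) (k : ℕ) :
    MemLp (unifKernel γ K (r + 1 + k)) 2 (unifPi (r + 1 + k)) :=
  (identDistrib_unifKernel γ hK hLS k).symm.memLp_snd h2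

lemma variance_integral_Km_cons (hK : Measurable K) (hLS : LocScaleInvariant K)
    (h2 : MemLp (refKernel γ K) 2 (unifPi r)) (k : ℕ) :
    Var[fun z => ∫ w, Km K (r + 1 + k + 1) (Fin.cons z w) ∂gpPi γ (r + 1 + k); gpMeasure γ] =
      ∫ u, (∫ w, (unifKernel γ K (r + 1 + k + 1) (Fin.cons u w) - thetaK γ K)
        ∂unifPi (r + 1 + k)) ^ 2 ∂unif01 := by
  have hcond : Measurable fun z => ∫ w, Km K (r + 1 + k + 1) (Fin.cons z w) ∂gpPi γ (r + 1 + k) :=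
    (((measurable_Km hK _).comp (measurable_finCons measurable_fst
      measurable_snd)).stronglyMeasurable.integral_prod_right').measurable
  have hinv : Measurable fun u => hGamma γ u⁻¹ := (measurable_hGamma γ).comp measurable_inv
  have hint : Integrable (fun p : ℝ × (Fin (r + 1 + k) → ℝ) =>
      unifKernel γ K (r + 1 + k + 1) (Fin.cons p.1 p.2)) (unif01.prod (unifPi (r + 1 + k))) :=
    ((memLp_unifKernel γ hK hLS h2 (k + 1)).comp_measurePreserving
      (measurePreserving_finCons unif01 (r + 1 + k))).integrable one_le_two
  have hmean : ∫ u, ∫ w, unifKernel γ K (r + 1 + k + 1) (Fin.cons u w) ∂unifPi (r + 1 + k) ∂unif01 =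
      thetaK γ K := by
    rw [thetaK_eq_integral_refKernel γ hK, ← (identDistrib_unifKernel γ hK hLS (k + 1)).integral_eq]
    exact (integral_prod _ hint).symm.trans (integral_comp_measurePreserving
      (measurePreserving_finCons unif01 (r + 1 + k)) (measurable_unifKernel γ hK _))
  rw [gpMeasure_eq_map_unif01, variance_map hcond.aemeasurable hinv.aemeasurable,
    variance_eq_integral (hcond.comp hinv).aemeasurable]
  simp only [Function.comp_apply, integral_Km_cons_hGamma_inv γ hK, hmean]
  refine integral_congr_ae (hint.prod_right_ae.mono fun u hu => congrArg (· ^ 2) ?_)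
  rw [integral_sub hu (integrable_const _), integral_const, probReal_univ, one_smul]

variable {Ω : Type*} [MeasurableSpace Ω] {P : Measure Ω} [IsProbabilityMeasure P] {Z : ℕ → Ω → ℝ}

lemma mul_zetaCov_one_eq_integral_sq_scaleMixture (hZ : ∀ i, Measurable (Z i))
    (hindep : iIndepFun Z P) (hlaw : ∀ i, P.map (Z i) = gpMeasure γ) (hK : Measurable K)
    (hLS : LocScaleInvariant K) (h2 : MemLp (refKernel γ K) 2 (unifPi r)) {k : ℕ}
    (hk : r + 2 ≤ k) :
    (r + k + 2 : ℝ) * zetaCov P K Z (r + 1 + k + 1) 1 =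
      ∫ x in Ioi 0, scaleMixture (scaledOrderDensity r k) (meanInsertionEffect γ K) x ^ 2 := by
  have hKm : MemLp (Km K (r + 1 + k + 1)) 2 (gpPi γ (r + 1 + k + 1)) :=
    (identDistrib_Km_unifKernel γ hK _).symm.memLp_snd (memLp_unifKernel γ hK hLS h2 (k + 1))
  rw [← mul_integral_sq_unifKernel_cons γ hK hLS h2 hk, ← variance_integral_Km_cons γ hK hLS h2 k]
  exact congrArg _ (zetaCov_succ_one_eq_variance hZ hindep hlaw hK (by omega) hKm)

end AsymptoticVariance

lemma memLp_two_of_momentCond {γ : ℝ} {q : ℕ} {K : (Fin q → ℝ) → ℝ} (hK : Measurable K)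
    (hMom : MomentCond γ K) : MemLp (fun z => K (refVec z)) 2 (gpPi γ (q - 1)) := by
  have hmeas : Measurable fun z : Fin (q - 1) → ℝ => K (refVec z) :=
    hK.comp (measurable_pi_lambda _ fun j => measurable_descStat j)
  rw [memLp_two_iff_lintegral_enorm_sq_lt_top hmeas.aestronglyMeasurable]
  refine (lintegral_congr fun z => ?_).trans_lt (hMom 2 two_pos)
  rw [Real.rpow_two, ENNReal.ofReal_pow (abs_nonneg _), ← Real.norm_eq_abs, ofReal_norm]

theorem limit_m_zeta_m_one_general {Ω : Type*} [MeasurableSpace Ω] (P : Measure Ω)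
    [IsProbabilityMeasure P] (γ : ℝ) (q : ℕ) (hq : 0 < q) (K : (Fin q → ℝ) → ℝ)
    (hK : Measurable K) (hLS : LocScaleInvariant K)
    (h2 : MemLp (fun z => K (refVec z)) 2 (gpPi γ (q - 1)))
    (Z : ℕ → Ω → ℝ) (hZ : ∀ i, Measurable (Z i)) (hindep : iIndepFun Z P)
    (hlaw : ∀ i, P.map (Z i) = gpMeasure γ) :
    Tendsto (fun m : ℕ => (m : ℝ) * zetaCov P K Z m 1) atTop (𝓝 (sigmaSqK γ K)) := by
  obtain ⟨r, rfl⟩ := Nat.exists_eq_add_one.2 hq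
  have href : MemLp (refKernel γ K) 2 (unifPi r) :=
    (identDistrib_kernel_refVec γ hK).memLp_snd h2
  have hlim : Tendsto (fun k : ℕ =>
      ∫ x in Ioi 0, scaleMixture (scaledOrderDensity r k) (meanInsertionEffect γ K) x ^ 2) atTop
      (𝓝 (sigmaSqK γ K)) := by
    rw [sigmaSqK_eq_integral_sq_scaleMixture γ hK hLS href]
    exact (isMixingWeight_erlangMajorant r).tendsto_integral_sq_scaleMixture
      (measurable_scaledOrderDensity r)
      ((eventually_ge_atTop (r + 2)).mono fun k hk t ht => norm_scaledOrderDensity_le hk ht)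
      (fun t ht => tendsto_scaledOrderDensity r ht) (measurable_meanInsertionEffect γ hK)
      (memLp_meanInsertionEffect γ hK hLS href)
  refine (tendsto_add_atTop_iff_nat (r + 2)).1 (hlim.congr' ?_)
  filter_upwards [eventually_ge_atTop (r + 2)] with k hk
  rw [← mul_zetaCov_one_eq_integral_sq_scaleMixture γ hZ hindep hlaw hK hLS href hk,
    show k + (r + 2) = r + 1 + k + 1 by omega]
  push_cast
  ring

/-- Proposition: limit of `m ζ_{m,1}`.
Under the kernel conditions, `lim_{m→∞} m ζ_{m,1} = σ²_K(γ)`. -/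
theorem limit_m_zeta_m_one
    {Ω : Type*} [MeasurableSpace Ω] (P : Measure Ω) [IsProbabilityMeasure P]
    (γ : ℝ) (q : ℕ) (hq : 3 ≤ q)
    (K : (Fin q → ℝ) → ℝ) (hKmeas : Measurable K)
    (hLS : LocScaleInvariant K)
    (hNonconst : ∃ x y : Fin q → ℝ, K x ≠ K y)
    (hMom : MomentCond γ K)
    (Z : ℕ → Ω → ℝ) (hZmeas : ∀ i, Measurable (Z i))
    (hIndep : iIndepFun Z P)
    (hDist : ∀ i, Measure.map (Z i) P = gpMeasure γ) :
    Tendsto (fun m : ℕ => (m : ℝ) * zetaCov P K Z m 1) atTop (𝓝 (sigmaSqK γ K)) :=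
  limit_m_zeta_m_one_general P γ q (by omega) K hKmeas hLS
    (memLp_two_of_momentCond hKmeas hMom) Z hZmeas hIndep hDist

end
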